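/- Let T and T′ be r-row rectangular fluctuating tableaux of the same type c = (c_1,…,c_n) with t := Σ_j |c_j| ≥ 1. If prom_i(T) = prom_i(T′) for all 1 ≤ i ≤ ⌊r/2⌋, then T = T′. -/

import Mathlib

open scoped Classical

noncomputable section

namespace FT

/-- A (raw) `r`-row integer vector; generalized partitions are the antitone ones. -/
abbrev GP (r : ℕ) := Fin r → ℤ

/-- The weakly decreasing rearrangement of a tuple. -/
def sortDesc {r : ℕ} (α : GP r) : GP r := fun i => (α ∘ Tuple.sort α) i.rev

/-- Standard basis vector (0-indexed). -/
def eV {r : ℕ} (a : Fin r) : GP r := fun i => if i = a then 1 else 0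

/-- Standard basis vector with 1-indexed row `a` (zero if out of range). -/
def eN (r : ℕ) (a : ℕ) : GP r := fun i => if (i : ℕ) + 1 = a then 1 else 0

/-- Indicator vector of a set of rows. -/
def indV {r : ℕ} (S : Finset (Fin r)) : GP r := fun i => if i ∈ S then 1 else 0

/-- `colStep r c μ λ`: `λ` is obtained from `μ` by adding (if `c ≥ 0`) or removing
(if `c ≤ 0`) a skew column of `|c|` boxes. -/
def colStep (r : ℕ) (c : ℤ) (μ lam : GP r) : Prop :=
  ∃ S : Finset (Fin r), S.card = c.natAbs ∧
    (if 0 ≤ c then lam = μ + indV S else lam = μ - indV S)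

/-- Skew fluctuating tableau of length `n` and type `c` (recorded at indices `0,…,n`;
values of `T` and `c` beyond those indices are irrelevant). -/
def IsSkewFT (r n : ℕ) (T : ℕ → GP r) (c : ℕ → ℤ) : Prop :=
  (∀ k ≤ n, Antitone (T k)) ∧ ∀ j < n, colStep r (c j) (T j) (T (j + 1))

/-- (Non-skew) fluctuating tableau: starts at the empty shape. -/
def IsFT (r n : ℕ) (T : ℕ → GP r) (c : ℕ → ℤ) : Prop :=
  IsSkewFT r n T c ∧ T 0 = 0

/-- Rectangular: the final shape is constant. -/
def Rect (r n : ℕ) (T : ℕ → GP r) : Prop := ∃ m : ℤ, ∀ i, T n i = m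

/-- Bender–Knuth involution `BK_i` (for `1 ≤ i ≤ n-1`). -/
def BK {r : ℕ} (i : ℕ) (T : ℕ → GP r) : ℕ → GP r :=
  fun k => if k = i then sortDesc (T (i + 1) + T (i - 1) - T i) else T k

/-- `BKseg a m = BK (a+m-1) ∘ ⋯ ∘ BK a` (apply `BK a` first). -/
def BKseg {r : ℕ} (a : ℕ) : ℕ → (ℕ → GP r) → ℕ → GP r
  | 0 => id
  | m + 1 => BK (a + m) ∘ BKseg a m

/-- Promotion `P = BK_{n-1} ∘ ⋯ ∘ BK_1` on length-`n` tableaux. -/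
def promo {r : ℕ} (n : ℕ) (T : ℕ → GP r) : ℕ → GP r := BKseg 1 (n - 1) T

/-- `BKsegRev a m = BK a ∘ ⋯ ∘ BK (a+m-1)` (apply `BK (a+m-1)` first). -/
def BKsegRev {r : ℕ} (a : ℕ) : ℕ → (ℕ → GP r) → ℕ → GP r
  | 0 => id
  | m + 1 => BKsegRev a m ∘ BK (a + m)

/-- Inverse of promotion: `P⁻¹ = BK_1 ∘ ⋯ ∘ BK_{n-1}`. -/
def promoInv {r : ℕ} (n : ℕ) (T : ℕ → GP r) : ℕ → GP r := BKsegRev 1 (n - 1) T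

def evacAux {r : ℕ} : ℕ → (ℕ → GP r) → ℕ → GP r
  | 0, T => T
  | m + 1, T => evacAux m (BKseg 1 (m + 1) T)

/-- Evacuation `E = BK_1 ∘ (BK_2∘BK_1) ∘ ⋯ ∘ (BK_{n-1}∘⋯∘BK_1)`. -/
def evac {r : ℕ} (n : ℕ) (T : ℕ → GP r) : ℕ → GP r := evacAux (n - 1) T

def devacAux {r : ℕ} (n : ℕ) : ℕ → (ℕ → GP r) → ℕ → GP r
  | 0, T => T
  | m + 1, T => BKseg (n - (m + 1)) (m + 1) (devacAux n m T)

/-- Dual evacuation `E* = (BK_{n-1}∘⋯∘BK_1) ∘ (BK_{n-1}∘⋯∘BK_2) ∘ ⋯ ∘ BK_{n-1}`. -/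
def devac {r : ℕ} (n : ℕ) (T : ℕ → GP r) : ℕ → GP r := devacAux n (n - 1) T

/-- `rev(-v)`. -/
def revNeg {r : ℕ} (v : GP r) : GP r := fun i => - v i.rev

/-- Time reversal `τ`. -/
def tauT {r : ℕ} (n : ℕ) (T : ℕ → GP r) : ℕ → GP r := fun k => T (n - k)

/-- `ϖ`. -/
def varpiT {r : ℕ} (T : ℕ → GP r) : ℕ → GP r := fun k => revNeg (T k)

/-- `ε`. -/
def epsT {r : ℕ} (n : ℕ) (T : ℕ → GP r) : ℕ → GP r := fun k => revNeg (T (n - k))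

/-- Sign of the `j`-th step of `T` (paper indexing: step `j` goes from `λ^{j-1}` to `λ^j`). -/
def sgnStep {r : ℕ} (T : ℕ → GP r) (j : ℕ) : ℤ :=
  if T j = T (j - 1) then 0 else if T (j - 1) ≤ T j then 1 else -1

/-- The switch involution `toggle_j` (paper indexing, `1 ≤ j ≤ n`). -/
def toggleT {r : ℕ} (j : ℕ) (T : ℕ → GP r) : ℕ → GP r :=
  fun m => if m < j then T m else fun i => T m i - sgnStep T j

/-- Number of boxes added/removed in the step from `T j` to `T (j+1)`. -/
def stepSize {r : ℕ} (T : ℕ → GP r) (j : ℕ) : ℕ :=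
  (Finset.univ.filter fun i : Fin r => T (j + 1) i ≠ T j i).card

/-- Cumulative step sizes: position of `T j` inside the oscillization. -/
def cum {r : ℕ} (T : ℕ → GP r) (j : ℕ) : ℕ := ∑ j' ∈ Finset.range j, stepSize T j'

/-- The `j`-th intermediate shape of the oscillization of the skew-column step `μ → λ`:
boxes are added smallest-row-first and removed largest-row-first. -/
def oscStep {r : ℕ} (μ lam : GP r) (j : ℕ) : GP r := fun i =>
  let S := Finset.univ.filter fun i' : Fin r => lam i' ≠ μ i'
  if i ∈ S ∧ (if μ i < lam i then (S.filter fun i' => i' ≤ i).card ≤ j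
              else (S.filter fun i' => i ≤ i').card ≤ j)
  then lam i else μ i

/-- Largest index `j ≤ n` with `cum T j ≤ k`. -/
def stdIdx {r : ℕ} (n : ℕ) (T : ℕ → GP r) (k : ℕ) : ℕ :=
  ((Finset.range (n + 1)).filter fun j => cum T j ≤ k).sup id

/-- The oscillization `std(T)` of a length-`n` tableau, a tableau of length `t = Σ|c_j|`. -/
def stdT {r : ℕ} (n : ℕ) (T : ℕ → GP r) : ℕ → GP r := fun k =>
  if stdIdx n T k = n then T n
  else oscStep (T (stdIdx n T k)) (T (stdIdx n T k + 1)) (k - cum T (stdIdx n T k))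

/-- Rows of the promotion–evacuation growth diagram: `PE t S u` is `P^u(S)`
for a length-`t` (oscillating) tableau `S`. -/
def PE {r : ℕ} (t : ℕ) (S : ℕ → GP r) (u : ℕ) : ℕ → GP r := (promo t)^[u] S

/-- `i ∈ {1,…,r-1}` is recorded at cell `(u,v)` of the growth diagram of `S`
(rows 1-indexed; `λ^{u,v} = P^u(S)(v-u)`). -/
def recorded (r t : ℕ) (S : ℕ → GP r) (i u v : ℕ) : Prop :=
  ∃ a b : Fin r,
    (PE t S (u - 1) (v - u) = PE t S u (v - u - 1) + eV a ∧
     PE t S (u - 1) (v - u + 1) = PE t S u (v - u) + eV b ∧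
     (a : ℕ) < i ∧ i ≤ (b : ℕ))
    ∨
    (PE t S u (v - u - 1) = PE t S (u - 1) (v - u) + eV a ∧
     PE t S u (v - u) = PE t S (u - 1) (v - u + 1) + eV b ∧
     (b : ℕ) < i ∧ i ≤ (a : ℕ))

/-- `i ∈ PM(T)_{u,v}` for an off-diagonal entry of the promotion matrix of `T`
(`u, v ∈ {1,…,t}`, `1 ≤ i ≤ r-1`), using the oscillization `std(T)`. -/
def PMmem (r n t : ℕ) (T : ℕ → GP r) (i u v : ℕ) : Prop :=
  1 ≤ u ∧ u ≤ t ∧ 1 ≤ v ∧ v ≤ t ∧ u ≠ v ∧ 1 ≤ i ∧ i ≤ r - 1 ∧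
    recorded r t (stdT n T) i u (if u < v then v else v + t)

/-- Graph of the partial promotion function `prom_i(T)`: `prom_i(T)(u) = v`.
By convention `prom_0 = prom_r = id` on `{1,…,t}`. -/
def promRel (r n t : ℕ) (T : ℕ → GP r) (i u v : ℕ) : Prop :=
  if i = 0 ∨ i = r then 1 ≤ u ∧ u ≤ t ∧ u = v else PMmem r n t T i u v

/-- Sum of the first `i` entries (1-indexed prefix sums). -/
def pSum {r : ℕ} (v : GP r) (i : ℕ) : ℤ :=
  ∑ j ∈ Finset.univ.filter (fun j : Fin r => (j : ℕ) < i), v j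

/-- The filled oscillized local-rule grid: row index `k` counts down from the top row
(`k = 0` is `std(λ → ν)`), column index `q` goes right; the left column is
`std(κ → λ)` read so that `grid cA κ λ ν k 0 = std(κ→λ)` at position `cA - k`. -/
def grid {r : ℕ} (cA : ℕ) (κ lam ν : GP r) : ℕ → ℕ → GP r
  | 0, q => oscStep lam ν q
  | k + 1, 0 => oscStep κ lam (cA - (k + 1))
  | k + 1, q + 1 =>
      sortDesc (grid cA κ lam ν k (q + 1) + grid cA κ lam ν (k + 1) q -
        grid cA κ lam ν k q)
  termination_by k q => (k, q)

/-- 1-indexed entry of a vector (0 if out of range). -/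
def ent {r : ℕ} (v : GP r) (h : ℕ) : ℤ := if hh : h - 1 < r then v ⟨h - 1, hh⟩ else 0

/-- The chain `j_0 = 1, j_h = ` least `h`-balance point of the lattice word of `T`
weakly after `j_{h-1}` (in `{1,…,n}`), `none` once undefined. An index `j` is an
`h`-balance point iff `(T j)_h = (T j)_{h+1}` (1-indexed rows). -/
def jChain (r n : ℕ) (T : ℕ → GP r) : ℕ → Option ℕ
  | 0 => some 1
  | h + 1 =>
    match jChain r n T h with
    | none => none
    | some jp =>
      if H : ∃ j, jp ≤ j ∧ j ≤ n ∧ ent (T j) (h + 1) = ent (T j) (h + 2) then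
        some (Nat.find H)
      else none

/-- `k`: the largest `h ≤ r-1` such that `j_1, …, j_h` are all defined. -/
def kVal (r n : ℕ) (T : ℕ → GP r) : ℕ :=
  ((Finset.range r).filter fun h => (jChain r n T h).isSome).sup id

/-- `j_h`, defaulting to `0` when undefined. -/
def jval (r n : ℕ) (T : ℕ → GP r) (h : ℕ) : ℕ := (jChain r n T h).getD 0

/-- `ω_c` for `c ∈ {0,±1,…,±r}`: top-justified column of `c` ones if `c ≥ 0`,
bottom-justified column of `|c|` minus-ones if `c < 0`. -/
def omegaGP (r : ℕ) (c : ℤ) : GP r := fun i =>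
  if 0 ≤ c then (if (i : ℕ) < c.natAbs then 1 else 0)
  else (if r - c.natAbs ≤ (i : ℕ) then -1 else 0)

/-- The extremal fluctuating tableau of type `c`: partial sums of the `ω_{c_j}`. -/
def extremal (r : ℕ) (c : ℕ → ℤ) (k : ℕ) : GP r := ∑ j ∈ Finset.range k, omegaGP r (c j)

/-- Lexicographic order: the first nonzero entry of `β - α` is positive. -/
def ltLex {r : ℕ} (α β : GP r) : Prop := ∃ i : Fin r, (∀ j, j < i → α j = β j) ∧ α i < β i

/-- Cumulative sums of `|c_j|` (block boundaries). -/
def cumC (c : ℕ → ℤ) (j : ℕ) : ℕ := ∑ j' ∈ Finset.range j, (c j').natAbs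

/-- Entry `(u,v)` (for `u,v ∈ {1,…,n}`) of the reduced promotion matrix `PMr^i(T)`:
the number of cells in the block `B_u × B_v` whose promotion-matrix entry contains `i`. -/
def PMr (r n t : ℕ) (T : ℕ → GP r) (c : ℕ → ℤ) (i u v : ℕ) : ℕ :=
  (((Finset.Icc (cumC c (u - 1) + 1) (cumC c u)) ×ˢ
    (Finset.Icc (cumC c (v - 1) + 1) (cumC c v))).filter
      fun p => PMmem r n t T i p.1 p.2).card

/-- The set of `r`-row fluctuating tableaux of length `n`, shape `lam`, type `c`,
in bundled (finitely-indexed) form. -/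
def FTset (r n : ℕ) (lam : GP r) (c : Fin n → ℤ) : Set (Fin (n + 1) → GP r) :=
  {T | (∀ k, Antitone (T k)) ∧ T 0 = 0 ∧ T (Fin.last n) = lam ∧
       ∀ j : Fin n, colStep r (c j) (T j.castSucc) (T j.succ)}

/-! An oscillating tableau is a path in `ℤ^r` that stays in the dominant chamber. Promotion cuts
off its first step and pushes the remaining path back into the chamber with the Pitman operators
of all simple roots, so row `u` of the growth diagram is the highest-weight path of the suffix of
the tableau after time `u`. Two consecutive rows differ by one box, which starts in the first row
(for an added box; in the last row for a removed one) and moves monotonically towards the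
opposite row. For a rectangular tableau the time reversal of each suffix is dominant, which gives
the endpoint of its highest-weight path: the box ends in the row opposite to the row `x` of the
`u`-th box of the tableau. Read along a column of the diagram, the rows of the boxes go
monotonically from `x` to the starting row. Thus `i` is recorded in the `u`-th row of the
promotion matrix, right of the diagonal, according to the distance of `x` from one end of the
rows, and in the `u`-th column, above the diagonal, according to its distance from the other end.
One of the two distances is less than `r / 2`. -/

section Depth

variable {f g : ℕ → ℤ} {p q s v : ℕ}

/-- The running maximum of `-f`: how far below `0` the walk `f` has been by time `v`. -/
def depth (f : ℕ → ℤ) (v : ℕ) : ℤ := partialSups (fun s => -f s) v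

/-- A walk that is skip-free downwards: it decreases by at most `1` in each step. -/
def SkipFree (f : ℕ → ℤ) : Prop := ∀ v, f v - 1 ≤ f (v + 1)

lemma depth_zero (f : ℕ → ℤ) : depth f 0 = -f 0 := by simp [depth]

lemma depth_succ (f : ℕ → ℤ) (v : ℕ) : depth f (v + 1) = max (depth f v) (-f (v + 1)) :=
  partialSups_add_one _ _

lemma depth_mono (f : ℕ → ℤ) (h : s ≤ v) : depth f s ≤ depth f v :=
  (partialSups _).monotone h

lemma neg_le_depth (f : ℕ → ℤ) (h : s ≤ v) : -f s ≤ depth f v :=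
  le_partialSups_of_le (fun s => -f s) h

lemma depth_le {c : ℤ} (h : ∀ s ≤ v, -f s ≤ c) : depth f v ≤ c := partialSups_le _ _ _ h

lemma exists_depth_eq (f : ℕ → ℤ) (v : ℕ) : ∃ s ≤ v, depth f v = -f s :=
  exists_partialSups_eq (fun s => -f s) v

lemma depth_nonneg (h : f 0 = 0) (v : ℕ) : 0 ≤ depth f v := by
  simpa [h] using neg_le_depth f v.zero_le

lemma SkipFree.exists_depth_eq_of_lt (hf : SkipFree f) (hpq : p ≤ q) {c : ℤ} (hp : depth f p ≤ c)
    (hq : c < depth f q) : ∃ z, p ≤ z ∧ z ≤ q ∧ -f z = c ∧ depth f z = c := by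
  induction q, hpq using Nat.le_induction with
  | base => omega
  | succ q hpq ih =>
    rcases lt_or_ge c (depth f q) with hc | hc
    · obtain ⟨z, hpz, hzq, hz⟩ := ih hc
      exact ⟨z, hpz, by omega, hz⟩
    · have hstep := hf q
      have hmem := neg_le_depth f le_rfl (v := q)
      rw [depth_succ] at hq
      exact ⟨q, hpq, by omega, by omega, by omega⟩

lemma braid_depth_le (f g : ℕ → ℤ) (v : ℕ) :
    depth f v + depth (f + 2 * depth f - depth (g - depth f)) v ≤ depth (f - depth g) v := by
  obtain ⟨s, hs, hs_eq⟩ := exists_depth_eq (f + 2 * depth f - depth (g - depth f)) v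
  obtain ⟨p, hp, hp_eq⟩ := exists_depth_eq (g - depth f) s
  obtain ⟨q, hq, hq_eq⟩ := exists_depth_eq f v
  simp only [Pi.add_apply, Pi.sub_apply, Pi.mul_apply, Pi.ofNat_apply, hp_eq] at hs_eq
  have hps := depth_mono f hp
  rcases le_total p q with hpq | hqp
  · have hq_le := neg_le_depth (f - depth g) hq
    have hgp := neg_le_depth g hpq
    have hfs := neg_le_depth f (le_refl s)
    simp only [Pi.sub_apply] at hq_le
    omega
  · have hs_le := neg_le_depth (f - depth g) hs
    have hgp := neg_le_depth g hp
    have hfq := neg_le_depth f hqp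
    have hsv := depth_mono f hs
    simp only [Pi.sub_apply] at hs_le
    omega

lemma SkipFree.braid_le_depth (hf : SkipFree f) (g : ℕ → ℤ) (v : ℕ) :
    depth (f - depth g) v ≤ depth f v + depth (f + 2 * depth f - depth (g - depth f)) v := by
  set h := f + 2 * depth f - depth (g - depth f)
  have h_apply (s : ℕ) : h s = f s + 2 * depth f s - depth (g - depth f) s := rfl
  obtain ⟨s, hs, hs_eq⟩ := exists_depth_eq (f - depth g) v
  obtain ⟨p, hp, hp_eq⟩ := exists_depth_eq g s
  rw [hs_eq, Pi.sub_apply, hp_eq]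
  have hp_le {z : ℕ} (hz : p ≤ z) : depth f p - g p ≤ depth (g - depth f) z := by
    have := neg_le_depth (g - depth f) hz
    simp only [Pi.sub_apply] at this
    omega
  have hpv := depth_mono f (hp.trans hs)
  rcases hpv.eq_or_lt with heq | hlt
  · have hs_le := neg_le_depth h hs
    have hps := depth_mono f hp
    have hsv := depth_mono f hs
    have := hp_le hp
    have := h_apply s
    omega
  · obtain ⟨z, hpz, hzv, hz, hz_depth⟩ := hf.exists_depth_eq_of_lt (hp.trans hs) le_rfl hlt
    have hz_le := neg_le_depth h hzv
    have hfs := neg_le_depth f hs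
    have := hp_le hpz
    have := h_apply z
    omega

lemma SkipFree.braid_depth (hf : SkipFree f) (g : ℕ → ℤ) :
    depth f + depth (f + 2 * depth f - depth (g - depth f)) = depth (f - depth g) :=
  funext fun v => le_antisymm (braid_depth_le f g v) (hf.braid_le_depth g v)

lemma SkipFree.depth_add_two_mul_max (hf : SkipFree f) (h0 : f 0 = 0) {c : ℤ} (hc : 0 ≤ c)
    (v : ℕ) : depth (fun s => f s + 2 * max 0 (depth f s - c)) v = min (depth f v) c := by
  apply le_antisymm
  · refine depth_le fun s hs => ?_
    have := neg_le_depth f (le_refl s)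
    have := depth_mono f hs
    omega
  · rcases lt_or_ge c (depth f v) with hcv | hcv
    · obtain ⟨z, -, hzv, hz, hz_depth⟩ :=
        hf.exists_depth_eq_of_lt v.zero_le (c := c) (by simpa [depth_zero, h0] using hc) hcv
      have := neg_le_depth (fun s => f s + 2 * max 0 (depth f s - c)) hzv
      omega
    · obtain ⟨s, hs, hs_eq⟩ := exists_depth_eq f v
      have := neg_le_depth (fun s => f s + 2 * max 0 (depth f s - c)) hs
      have := depth_mono f hs
      omega

lemma depth_succ_sub_depth_one (f : ℕ → ℤ) (s : ℕ) :
    depth f (s + 1) - depth f 1 =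
      max 0 (depth (fun s => f (s + 1) - f 1) s - (f 1 + depth f 1)) := by
  induction s with
  | zero =>
    have := neg_le_depth f (le_refl 1)
    simp only [depth_zero, zero_add]
    omega
  | succ s ih =>
    rw [depth_succ f, depth_succ (fun s => f (s + 1) - f 1)]
    omega

lemma SkipFree.depth_shift (hf : SkipFree f) (v : ℕ) :
    depth f (v + 1) - depth f 1
        + depth (fun s => f (s + 1) - f 1 + 2 * (depth f (s + 1) - depth f 1)) v
      = depth (fun s => f (s + 1) - f 1) v := by
  have hg : SkipFree fun s => f (s + 1) - f 1 := fun s => by have := hf (s + 1); simp only; omega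
  have hc := neg_le_depth f (le_refl 1)
  simp only [depth_succ_sub_depth_one]
  rw [hg.depth_add_two_mul_max (by simp) (by omega)]
  omega

lemma depth_rev_le (f : ℕ → ℤ) (L v : ℕ) :
    depth (fun s => f (L - s) - f L + 2 * (depth f (L - s) - depth f L)) v
        - (depth f L - depth f (L - v)) ≤ depth (fun s => f (L - s) - f L) v := by
  obtain ⟨s, hs, hs_eq⟩ :=
    exists_depth_eq (fun s => f (L - s) - f L + 2 * (depth f (L - s) - depth f L)) v
  obtain ⟨q, hq, hq_eq⟩ := exists_depth_eq f L
  have hLs := neg_le_depth f (le_refl (L - s))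
  have hvs := depth_mono f (show L - v ≤ L - s by omega)
  rcases le_total (L - v) q with hvq | hqv
  · have hq_le := neg_le_depth (fun s => f (L - s) - f L) (show L - q ≤ v by omega)
    simp only [Nat.sub_sub_self hq] at hq_le
    omega
  · have hs_le := neg_le_depth (fun s => f (L - s) - f L) hs
    have := neg_le_depth f hqv
    have := depth_mono f (Nat.sub_le L s)
    omega

lemma SkipFree.le_depth_rev (hf : SkipFree f) (L v : ℕ) :
    depth (fun s => f (L - s) - f L) v
      ≤ depth (fun s => f (L - s) - f L + 2 * (depth f (L - s) - depth f L)) v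
        - (depth f L - depth f (L - v)) := by
  set g := fun s => f (L - s) - f L + 2 * (depth f (L - s) - depth f L)
  have g_apply (s : ℕ) : g s = f (L - s) - f L + 2 * (depth f (L - s) - depth f L) := rfl
  obtain ⟨s, hs, hs_eq⟩ := exists_depth_eq (fun s => f (L - s) - f L) v
  rw [hs_eq]
  rcases (depth_mono f (Nat.sub_le L v)).eq_or_lt with heq | hlt
  · have := depth_mono f (show L - v ≤ L - s by omega)
    have := depth_mono f (Nat.sub_le L s)
    have := neg_le_depth g hs
    have := g_apply s
    omega
  · obtain ⟨z, hvz, hzL, hz, hz_depth⟩ := hf.exists_depth_eq_of_lt (Nat.sub_le L v) le_rfl hlt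
    have hz_le := neg_le_depth g (show L - z ≤ v by omega)
    have hfs := neg_le_depth f (Nat.sub_le L s)
    rw [g_apply, Nat.sub_sub_self hzL] at hz_le
    omega

lemma SkipFree.depth_rev (hf : SkipFree f) (L v : ℕ) :
    depth (fun s => f (L - s) - f L + 2 * (depth f (L - s) - depth f L)) v
        - (depth f L - depth f (L - v)) = depth (fun s => f (L - s) - f L) v :=
  le_antisymm (depth_rev_le f L v) (hf.le_depth_rev L v)

end Depth

section Pitman

/-- A path in `ℤ^ℕ`: `π v j` is its `j`-th coordinate at time `v`. -/
abbrev LatticePath := ℕ → ℕ → ℤ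

/-- The simple root `e_i - e_{i+1}` of type `A`. -/
def simpleRoot (i : ℕ) : ℕ → ℤ := Pi.single i 1 - Pi.single (i + 1) 1

/-- The pairing of a path with the `i`-th simple coroot. -/
def gap (i : ℕ) (π : LatticePath) (v : ℕ) : ℤ := π v i - π v (i + 1)

/-- The Pitman operator of the `i`-th simple root: it reflects `π` by just enough to make
coordinate `i` dominate coordinate `i + 1`. -/
def pitman (i : ℕ) (π : LatticePath) : LatticePath :=
  fun v => π v + depth (gap i π) v • simpleRoot i

/-- The path `π` starts at the origin, and its `v`-th step is `δ v` times a basis vector. -/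
structure IsUnitPath (δ : ℕ → ℤ) (π : LatticePath) : Prop where
  zero : π 0 = 0
  neg_one_le (v : ℕ) : -1 ≤ δ v
  le_one (v : ℕ) : δ v ≤ 1
  step (v : ℕ) : ∃ q, π (v + 1) = π v + Pi.single q (δ v)

/-- The first `r` coordinates of `π` are weakly decreasing at all times. -/
def IsDominant (r : ℕ) (π : LatticePath) : Prop := ∀ i, i + 1 < r → 0 ≤ gap i π

variable {δ : ℕ → ℤ} {π : LatticePath} {r m i j L : ℕ}

lemma simpleRoot_apply (i j : ℕ) :
    simpleRoot i j = (if j = i then 1 else 0) - if j = i + 1 then 1 else 0 := by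
  simp only [simpleRoot, Pi.sub_apply, Pi.single_apply]

lemma pitman_apply (i : ℕ) (π : LatticePath) (v j : ℕ) :
    pitman i π v j = π v j + depth (gap i π) v * simpleRoot i j := by
  simp only [pitman, Pi.add_apply, Pi.smul_apply, smul_eq_mul]

lemma gap_pitman (i j : ℕ) (π : LatticePath) :
    gap j (pitman i π) =
      gap j π + (simpleRoot i j - simpleRoot i (j + 1)) • depth (gap i π) := by
  funext v
  simp only [gap, pitman_apply, Pi.add_apply, Pi.smul_apply, smul_eq_mul]
  ring

lemma gap_pitman_self (i : ℕ) (π : LatticePath) :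
    gap i (pitman i π) = gap i π + 2 * depth (gap i π) := by
  rw [gap_pitman]
  funext v
  simp [simpleRoot_apply]

lemma gap_succ_pitman (i : ℕ) (π : LatticePath) :
    gap (i + 1) (pitman i π) = gap (i + 1) π - depth (gap i π) := by
  rw [gap_pitman, show simpleRoot i (i + 1) - simpleRoot i (i + 1 + 1) = -1 by
    grind [simpleRoot_apply], neg_one_smul, sub_eq_add_neg]

lemma gap_pitman_succ (i : ℕ) (π : LatticePath) :
    gap i (pitman (i + 1) π) = gap i π - depth (gap (i + 1) π) := by
  rw [gap_pitman, show simpleRoot (i + 1) i - simpleRoot (i + 1) (i + 1) = -1 by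
    grind [simpleRoot_apply], neg_one_smul, sub_eq_add_neg]

lemma gap_pitman_of_lt (π : LatticePath) (h : i + 1 < j) : gap i (pitman j π) = gap i π := by
  rw [gap_pitman]
  simp [simpleRoot_apply, show i ≠ j by omega, show i ≠ j + 1 by omega, show i + 1 ≠ j by omega]

lemma gap_pitman_of_gt (π : LatticePath) (h : i + 1 < j) : gap j (pitman i π) = gap j π := by
  rw [gap_pitman]
  simp [simpleRoot_apply, show j ≠ i by omega, show j ≠ i + 1 by omega, show j + 1 ≠ i by omega]

lemma gap_zero (i : ℕ) (h : π 0 = 0) : gap i π 0 = 0 := by simp [gap, h]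

lemma IsUnitPath.skipFree_gap (h : IsUnitPath δ π) (i : ℕ) : SkipFree (gap i π) := fun v => by
  obtain ⟨q, hq⟩ := h.step v
  have := h.neg_one_le v
  have := h.le_one v
  simp only [gap, hq, Pi.add_apply, Pi.single_apply]
  split_ifs <;> omega

protected lemma IsUnitPath.pitman (h : IsUnitPath δ π) (i : ℕ) : IsUnitPath δ (pitman i π) := by
  refine ⟨?_, h.neg_one_le, h.le_one, fun v => ?_⟩
  · simp [pitman, depth_zero, gap_zero i h.zero, h.zero]
  obtain ⟨q, hq⟩ := h.step v
  have hle := neg_le_depth (gap i π) (le_refl v)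
  have hsf := h.skipFree_gap i v
  rcases le_or_gt (-gap i π (v + 1)) (depth (gap i π) v) with hdepth | hdepth
  · refine ⟨q, ?_⟩
    simp only [pitman]
    rw [depth_succ, max_eq_left hdepth, hq, add_right_comm]
  · -- at a new record of the depth, the step is moved to the other row of the root
    have hgap : gap i π (v + 1) =
        gap i π v + ((if i = q then δ v else 0) - if i + 1 = q then δ v else 0) := by
      simp only [gap, hq, Pi.add_apply, Pi.single_apply]
      ring
    have := h.neg_one_le v
    have := h.le_one v
    refine ⟨if q = i then i + 1 else i, funext fun j => ?_⟩
    simp only [pitman_apply, Pi.add_apply, hq, Pi.single_apply, depth_succ, simpleRoot_apply,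
      show max (depth (gap i π) v) (-gap i π (v + 1)) = depth (gap i π) v + 1 by omega, add_mul,
      one_mul]
    split_ifs at hgap ⊢ <;> omega

lemma pitman_eq_self (h0 : π 0 = 0) (hi : 0 ≤ gap i π) : pitman i π = π := by
  funext v
  have : depth (gap i π) v = 0 :=
    le_antisymm (depth_le fun s _ => neg_nonpos.mpr (hi s)) (depth_nonneg (gap_zero i h0) v)
  simp [pitman, this]

lemma pitman_idem (h0 : π 0 = 0) (i : ℕ) : pitman i (pitman i π) = pitman i π := by
  refine pitman_eq_self ?_ fun v => ?_
  · simp [pitman, depth_zero, gap_zero i h0, h0]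
  · have := neg_le_depth (gap i π) (le_refl v)
    have := depth_nonneg (gap_zero i h0) v
    simp only [gap_pitman_self, Pi.add_apply, Pi.mul_apply, Pi.ofNat_apply]
    omega

lemma pitman_comm (π : LatticePath) (h : i + 1 < j) :
    pitman i (pitman j π) = pitman j (pitman i π) := by
  funext v k
  simp only [pitman_apply, gap_pitman_of_lt π h, gap_pitman_of_gt π h]
  ring

lemma IsUnitPath.pitman_braid (h : IsUnitPath δ π) (i : ℕ) :
    pitman i (pitman (i + 1) (pitman i π)) =
      pitman (i + 1) (pitman i (pitman (i + 1) π)) := by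
  have hl := congrFun ((h.skipFree_gap i).braid_depth (gap (i + 1) π))
  have hr := congrFun ((h.skipFree_gap (i + 1)).braid_depth (gap i π))
  simp only [Pi.add_apply] at hl hr
  funext v j
  simp only [pitman_apply, gap_pitman_self, gap_succ_pitman, gap_pitman_succ, ← hl, ← hr]
  ring

/-- The operator `P_{m-1} ⋯ P_1 P_0`. -/
def sweep : ℕ → LatticePath → LatticePath
  | 0, π => π
  | m + 1, π => pitman m (sweep m π)

/-- The Pitman operator of the longest permutation of the first `r` coordinates. It sends a path
to the dominant path of highest weight in the same crystal component. -/
def highest : ℕ → LatticePath → LatticePath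
  | 0, π => π
  | r + 1, π => highest r (sweep r π)

protected lemma IsUnitPath.sweep (h : IsUnitPath δ π) (m : ℕ) : IsUnitPath δ (sweep m π) := by
  induction m with
  | zero => exact h
  | succ m ih => exact ih.pitman m

lemma sweep_pitman_of_lt (π : LatticePath) (h : m < j) :
    sweep m (pitman j π) = pitman j (sweep m π) := by
  induction m with
  | zero => rfl
  | succ m ih => rw [sweep, sweep, ih (by omega), pitman_comm _ h]

lemma sweep_succ_pitman_zero (h0 : π 0 = 0) (m : ℕ) :
    sweep (m + 1) (pitman 0 π) = sweep (m + 1) π := by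
  induction m with
  | zero => exact pitman_idem h0 0
  | succ m ih => rw [sweep, ih, ← sweep]

lemma IsUnitPath.sweep_pitman_succ (h : IsUnitPath δ π) (him : i + 2 ≤ m) :
    sweep m (pitman (i + 1) π) = pitman i (sweep m π) := by
  induction m, him using Nat.le_induction with
  | base =>
    simp only [sweep]
    rw [sweep_pitman_of_lt π (Nat.lt_succ_self i), (h.sweep i).pitman_braid]
  | succ m him ih =>
    rw [sweep, sweep, ih, pitman_comm _ him]

lemma IsUnitPath.highest_pitman (h : IsUnitPath δ π) (hi : i + 1 < r) :
    highest r (pitman i π) = highest r π := by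
  induction r generalizing i π with
  | zero => omega
  | succ r ih =>
    rw [highest, highest]
    rcases i with - | i
    · obtain ⟨m, rfl⟩ := Nat.exists_eq_add_of_lt (Nat.succ_lt_succ_iff.mp hi)
      rw [sweep_succ_pitman_zero h.zero]
    · rw [h.sweep_pitman_succ (by omega)]
      exact ih (h.sweep r) (by omega)

lemma IsUnitPath.apply_sweep {α : Type*} {F : LatticePath → α} (h : IsUnitPath δ π)
    (hF : ∀ i ρ, i < m → IsUnitPath δ ρ → F (pitman i ρ) = F ρ) :
    F (sweep m π) = F π := by
  induction m with
  | zero => rfl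
  | succ m ih =>
    rw [sweep, hF _ _ m.lt_succ_self (h.sweep m),
      ih fun i ρ hi => hF i ρ (hi.trans m.lt_succ_self)]

lemma IsUnitPath.apply_highest {α : Type*} {F : LatticePath → α} (h : IsUnitPath δ π)
    (hF : ∀ i ρ, i + 1 < r → IsUnitPath δ ρ → F (pitman i ρ) = F ρ) :
    F (highest r π) = F π := by
  induction r generalizing π with
  | zero => rfl
  | succ r ih =>
    rw [highest, ih (h.sweep r) fun i ρ hi => hF i ρ (by omega)]
    exact h.apply_sweep fun i ρ hi => hF i ρ (by omega)

protected lemma IsUnitPath.highest (h : IsUnitPath δ π) (r : ℕ) : IsUnitPath δ (highest r π) := by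
  induction r generalizing π with
  | zero => exact h
  | succ r ih => exact ih (h.sweep r)

lemma sweep_eq_self (h0 : π 0 = 0) (h : IsDominant (m + 1) π) : sweep m π = π := by
  induction m with
  | zero => rfl
  | succ m ih =>
    rw [sweep, ih fun i hi => h i (by omega), pitman_eq_self h0 (h m (by omega))]

lemma highest_eq_self (h0 : π 0 = 0) (h : IsDominant r π) : highest r π = π := by
  induction r with
  | zero => rfl
  | succ r ih => rw [highest, sweep_eq_self h0 h, ih fun i hi => h i (by omega)]

lemma IsUnitPath.highest_comp_highest {δ' : ℕ → ℤ} {Φ : LatticePath → LatticePath}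
    (h : IsUnitPath δ π) (hΦ : ∀ ρ, IsUnitPath δ ρ → IsUnitPath δ' (Φ ρ))
    (σ : ℕ → ℕ) (hσ : ∀ i, i + 1 < r → σ i + 1 < r)
    (hcomm : ∀ i ρ, i + 1 < r → IsUnitPath δ ρ →
      pitman (σ i) (Φ (pitman i ρ)) = pitman (σ i) (Φ ρ)) :
    highest r (Φ (highest r π)) = highest r (Φ π) :=
  h.apply_highest (F := fun ρ => highest r (Φ ρ)) fun i ρ hi hρ => by
    rw [← (hΦ _ (hρ.pitman i)).highest_pitman (hσ i hi), hcomm i ρ hi hρ,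
      (hΦ ρ hρ).highest_pitman (hσ i hi)]

/-- The path `π` from time `u` on, translated to the origin. -/
def shift (u : ℕ) (π : LatticePath) : LatticePath := fun v => π (u + v) - π u

/-- The path `π` traversed backwards from time `L`, translated to the origin. -/
def timeRev (L : ℕ) (π : LatticePath) : LatticePath := fun v => π (L - v) - π L

/-- The reversal of the first `r` rows, fixing all later ones. -/
def rowRev (r j : ℕ) : ℕ := if j < r then r - 1 - j else j

/-- The dual path: negated, with its first `r` coordinates reversed. -/
def dual (r : ℕ) (π : LatticePath) : LatticePath := fun v j => -π v (rowRev r j)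

lemma rowRev_of_lt (h : j < r) : rowRev r j = r - 1 - j := if_pos h

lemma rowRev_rowRev (r j : ℕ) : rowRev r (rowRev r j) = j := by
  simp only [rowRev]
  split_ifs <;> omega

lemma dual_dual (r : ℕ) (π : LatticePath) : dual r (dual r π) = π := by
  funext v j
  simp only [dual, rowRev_rowRev, neg_neg]

protected lemma IsUnitPath.shift (h : IsUnitPath δ π) (u : ℕ) :
    IsUnitPath (fun v => δ (u + v)) (shift u π) where
  zero := by simp [shift]
  neg_one_le v := h.neg_one_le _
  le_one v := h.le_one _
  step v := by
    obtain ⟨q, hq⟩ := h.step (u + v)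
    exact ⟨q, by rw [shift, ← add_assoc, hq, shift, add_sub_right_comm]⟩

protected lemma IsUnitPath.timeRev (h : IsUnitPath δ π) (L : ℕ) :
    IsUnitPath (fun v => if v < L then -δ (L - 1 - v) else 0) (timeRev L π) where
  zero := by simp [timeRev]
  neg_one_le v := by have := h.le_one (L - 1 - v); split_ifs <;> omega
  le_one v := by have := h.neg_one_le (L - 1 - v); split_ifs <;> omega
  step v := by
    obtain ⟨q, hq⟩ := h.step (L - 1 - v)
    refine ⟨q, ?_⟩
    rcases lt_or_ge v L with hv | hv
    · rw [show L - 1 - v + 1 = L - v by omega] at hq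
      rw [timeRev, timeRev, hq, if_pos hv, Pi.single_neg,
        show L - (v + 1) = L - 1 - v by omega]
      abel
    · rw [timeRev, timeRev, if_neg hv.not_gt, show L - (v + 1) = L - v by omega]
      simp

protected lemma IsUnitPath.dual (h : IsUnitPath δ π) (r : ℕ) : IsUnitPath (-δ) (dual r π) where
  zero := by funext j; simp [dual, h.zero]
  neg_one_le v := neg_le_neg (h.le_one v)
  le_one v := neg_le.mp (h.neg_one_le v)
  step v := by
    obtain ⟨q, hq⟩ := h.step v
    refine ⟨rowRev r q, funext fun j => ?_⟩
    have hj : rowRev r j = q ↔ j = rowRev r q :=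
      ⟨fun h => by rw [← h, rowRev_rowRev], fun h => by rw [h, rowRev_rowRev]⟩
    simp only [hq, dual, Pi.add_apply, Pi.single_apply, Pi.neg_apply, hj, neg_add]
    split_ifs <;> rfl

lemma IsUnitPath.pitman_shift_pitman (h : IsUnitPath δ π) (i : ℕ) :
    pitman i (shift 1 (pitman i π)) = pitman i (shift 1 π) := by
  have hdepth := (h.skipFree_gap i).depth_shift
  have hgap : gap i (shift 1 π) = fun s => gap i π (s + 1) - gap i π 1 := by
    funext s
    simp only [gap, shift, Pi.sub_apply, add_comm 1 s]
    ring
  have hgap' : gap i (shift 1 (pitman i π)) = fun s => gap i π (s + 1) - gap i π 1 +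
      2 * (depth (gap i π) (s + 1) - depth (gap i π) 1) := by
    funext s
    have := congrFun (gap_pitman_self i π)
    simp only [gap, shift, Pi.sub_apply, Pi.add_apply, Pi.mul_apply, Pi.ofNat_apply,
      add_comm 1 s] at this ⊢
    linarith [this (s + 1), this 1]
  funext v j
  rw [pitman_apply, pitman_apply, hgap, hgap', ← hdepth]
  simp only [shift, Pi.sub_apply, pitman_apply, add_comm 1 v]
  ring

lemma IsUnitPath.pitman_timeRev_pitman (h : IsUnitPath δ π) (L i : ℕ) :
    pitman i (timeRev L (pitman i π)) = pitman i (timeRev L π) := by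
  have hdepth := (h.skipFree_gap i).depth_rev L
  have hgap : gap i (timeRev L π) = fun s => gap i π (L - s) - gap i π L := by
    funext s
    simp only [gap, timeRev, Pi.sub_apply]
    ring
  have hgap' : gap i (timeRev L (pitman i π)) = fun s => gap i π (L - s) - gap i π L +
      2 * (depth (gap i π) (L - s) - depth (gap i π) L) := by
    funext s
    have := congrFun (gap_pitman_self i π)
    simp only [gap, timeRev, Pi.sub_apply, Pi.add_apply, Pi.mul_apply, Pi.ofNat_apply]
      at this ⊢
    linarith [this (L - s), this L]
  funext v j
  rw [pitman_apply, pitman_apply, hgap, hgap', ← hdepth]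
  simp only [timeRev, Pi.sub_apply, pitman_apply]
  ring

lemma gap_dual (π : LatticePath) (hi : i + 1 < r) : gap i (dual r π) = gap (r - 2 - i) π := by
  funext v
  simp only [gap, dual, rowRev_of_lt hi, rowRev_of_lt (show i < r by omega)]
  rw [show r - 1 - i = r - 2 - i + 1 by omega, show r - 1 - (i + 1) = r - 2 - i by omega]
  ring

lemma dual_pitman (π : LatticePath) (hi : i + 1 < r) :
    dual r (pitman i π) = pitman (r - 2 - i) (dual r π) := by
  funext v j
  rw [pitman_apply, gap_dual π (by omega), show r - 2 - (r - 2 - i) = i by omega]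
  simp only [dual, pitman_apply, simpleRoot_apply,
    show rowRev r j = i ↔ j = r - 2 - i + 1 by grind [rowRev],
    show rowRev r j = i + 1 ↔ j = r - 2 - i by grind [rowRev]]
  ring

end Pitman

section Dominance

variable {δ : ℕ → ℤ} {π : LatticePath} {r i j : ℕ} {I : Finset ℕ}

lemma eq_range_card_of_forall_succ_mem (hI : ∀ i, i + 1 ∈ I → i ∈ I) :
    I = Finset.range I.card := by
  have hlower : IsLowerSet (I : Set ℕ) := fun x y hyx hx =>
    Nat.decreasingInduction (fun k _ hk => hI k hk) hx hyx
  rcases hlower.eq_univ_or_Iio with huniv | ⟨n, hn⟩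
  · exact absurd (huniv ▸ I.finite_toSet) Set.infinite_univ
  · obtain rfl : I = Finset.range n := by
      rw [← Finset.coe_inj, hn, Finset.coe_range]
    rw [Finset.card_range]

lemma sum_range_simpleRoot_nonneg (i k : ℕ) : 0 ≤ ∑ j ∈ Finset.range k, simpleRoot i j := by
  simp only [simpleRoot_apply, Finset.sum_sub_distrib, Finset.sum_ite_eq', Finset.mem_range]
  split_ifs <;> omega

lemma sum_range_le_sum_range_pitman (h0 : π 0 = 0) (i k v : ℕ) :
    ∑ j ∈ Finset.range k, π v j ≤ ∑ j ∈ Finset.range k, pitman i π v j := by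
  simp only [pitman_apply, Finset.sum_add_distrib, ← Finset.mul_sum]
  have := mul_nonneg (depth_nonneg (gap_zero i h0) v) (sum_range_simpleRoot_nonneg i k)
  omega

lemma IsUnitPath.sum_range_le_sum_range_sweep (h : IsUnitPath δ π) (m k v : ℕ) :
    ∑ j ∈ Finset.range k, π v j ≤ ∑ j ∈ Finset.range k, sweep m π v j := by
  induction m with
  | zero => exact le_rfl
  | succ m ih => exact ih.trans (sum_range_le_sum_range_pitman (h.sweep m).zero m k v)

lemma IsUnitPath.sum_range_le_sum_range_highest (h : IsUnitPath δ π) (r k v : ℕ) :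
    ∑ j ∈ Finset.range k, π v j ≤ ∑ j ∈ Finset.range k, highest r π v j := by
  induction r generalizing π with
  | zero => exact le_rfl
  | succ r ih => exact (h.sum_range_le_sum_range_sweep r k v).trans (ih (h.sweep r))

lemma IsUnitPath.sum_range_highest (h : IsUnitPath δ π) (r v : ℕ) :
    ∑ j ∈ Finset.range r, highest r π v j = ∑ j ∈ Finset.range r, π v j :=
  h.apply_highest (F := fun ρ => ∑ j ∈ Finset.range r, ρ v j) fun i ρ hi _ => by
    have hroot : ∑ j ∈ Finset.range r, simpleRoot i j = 0 := by
      simp [simpleRoot_apply, Finset.sum_sub_distrib, hi, show i < r by omega]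
    simp only [pitman_apply, Finset.sum_add_distrib, ← Finset.mul_sum, hroot, mul_zero, add_zero]

lemma sum_le_sum_insert_erase_pitman (π : LatticePath) (v : ℕ) (hi : i ∉ I) (hi' : i + 1 ∈ I) :
    ∑ j ∈ I, π v j ≤ ∑ j ∈ insert i (I.erase (i + 1)), pitman i π v j := by
  have hmem : i ∉ I.erase (i + 1) := fun h => hi (Finset.mem_of_mem_erase h)
  have hroot : ∑ j ∈ I.erase (i + 1), simpleRoot i j = 0 :=
    Finset.sum_eq_zero fun j hj => by
      simp [simpleRoot_apply, Finset.ne_of_mem_erase hj, ne_of_mem_of_not_mem hj hmem]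
  have hgap := neg_le_depth (gap i π) (le_refl v)
  rw [Finset.sum_insert hmem, ← Finset.add_sum_erase I _ hi', pitman_apply]
  simp only [pitman_apply, Finset.sum_add_distrib, ← Finset.mul_sum, hroot,
    show simpleRoot i i = 1 by simp [simpleRoot_apply], gap] at hgap ⊢
  omega

lemma IsUnitPath.sum_le_sum_range_highest (h : IsUnitPath δ π) (v : ℕ)
    (hI : I ⊆ Finset.range r) :
    ∑ j ∈ I, π v j ≤ ∑ j ∈ Finset.range I.card, highest r π v j := by
  induction hm : ∑ j ∈ I, j using Nat.strong_induction_on generalizing I π with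
  | _ m ih =>
    by_cases hlower : ∀ i, i + 1 ∈ I → i ∈ I
    · rw [eq_range_card_of_forall_succ_mem hlower, Finset.card_range]
      exact h.sum_range_le_sum_range_highest r _ v
    · push Not at hlower
      obtain ⟨i, hi', hi⟩ := hlower
      have hmem : i ∉ I.erase (i + 1) := fun h => hi (Finset.mem_of_mem_erase h)
      have hir := Finset.mem_range.mp (hI hi')
      have hsum : ∑ j ∈ insert i (I.erase (i + 1)), j < m := by
        rw [← hm, Finset.sum_insert hmem, ← Finset.add_sum_erase I _ hi']
        omega
      have hsub : insert i (I.erase (i + 1)) ⊆ Finset.range r :=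
        Finset.insert_subset (Finset.mem_range.mpr (by omega))
          ((Finset.erase_subset _ _).trans hI)
      have hle := ih _ hsum (h.pitman i) hsub rfl
      rw [Finset.card_insert_of_notMem hmem, Finset.card_erase_add_one hi',
        h.highest_pitman hir] at hle
      exact (sum_le_sum_insert_erase_pitman π v hi hi').trans hle

lemma IsUnitPath.sum_range_le_sum_highest (h : IsUnitPath δ π) {L : ℕ}
    (hlow : IsDominant r (timeRev L π)) (hI : I ⊆ Finset.range r) :
    ∑ j ∈ Finset.range I.card, π L j ≤ ∑ j ∈ I, highest r π L j := by
  have hrev : highest r (timeRev L (highest r π)) = timeRev L π := by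
    rw [h.highest_comp_highest (Φ := timeRev L) (fun _ hρ => hρ.timeRev L) id (fun _ hi => hi)
      fun i ρ _ hρ => hρ.pitman_timeRev_pitman L i, highest_eq_self (h.timeRev L).zero hlow]
  have hle := ((h.highest r).timeRev L).sum_le_sum_range_highest L hI
  simpa [hrev, timeRev, h.zero, (h.highest r).zero] using hle

lemma IsUnitPath.highest_apply_of_isDominant_timeRev (h : IsUnitPath δ π) {L : ℕ}
    (hlow : IsDominant r (timeRev L π)) (hj : j < r) : highest r π L j = π L (r - 1 - j) := by
  have hIco (k : ℕ) : Finset.Ico k r ⊆ Finset.range r := fun x hx => by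
    simp only [Finset.mem_Ico, Finset.mem_range] at hx ⊢
    omega
  have hpartial (k : ℕ) (hk : k ≤ r) :
      ∑ j ∈ Finset.range k, highest r π L j = ∑ j ∈ Finset.Ico (r - k) r, π L j := by
    have hle := h.sum_le_sum_range_highest L (hIco (r - k))
    have hge := h.sum_range_le_sum_highest hlow (hIco k)
    rw [Nat.card_Ico] at hle hge
    rw [Nat.sub_sub_self hk] at hle
    have := h.sum_range_highest r L
    have := Finset.sum_range_add_sum_Ico (π L) (Nat.sub_le r k)
    have := Finset.sum_range_add_sum_Ico (highest r π L) hk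
    omega
  have hsucc := hpartial (j + 1) hj
  rw [Finset.sum_range_succ, hpartial j hj.le, show r - j = r - (j + 1) + 1 by omega,
    Finset.sum_eq_sum_Ico_succ_bot (show r - (j + 1) < r by omega)] at hsucc
  rw [show r - 1 - j = r - (j + 1) by omega]
  omega

end Dominance

section Sorting

variable {r : ℕ} {α β ν : GP r}

lemma sortDesc_antitone (α : GP r) : Antitone (sortDesc α) := fun _ _ hij =>
  Tuple.monotone_sort α (Fin.rev_le_rev.mpr hij)

lemma sortDesc_comp_perm (σ : Equiv.Perm (Fin r)) (h : Antitone (α ∘ σ)) :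
    sortDesc α = α ∘ σ := by
  have hmono : Monotone (α ∘ (Fin.revPerm.trans σ : Equiv.Perm (Fin r))) := fun i j hij => by
    simpa using h (Fin.rev_le_rev.mpr hij)
  funext i
  rw [sortDesc, Tuple.unique_monotone (Tuple.monotone_sort α) hmono]
  simp

lemma exists_sortDesc_sub_eV (hν : Antitone ν) (a : Fin r) :
    ∃ b, a ≤ b ∧ ν b = ν a ∧ sortDesc (ν - eV a) = ν - eV b := by
  obtain ⟨b, hb, hmax⟩ := Finset.exists_max_image (Finset.univ.filter (ν · = ν a)) id ⟨a, by simp⟩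
  simp only [Finset.mem_filter, Finset.mem_univ, true_and, id] at hb hmax
  have hswap : (ν - eV a) ∘ Equiv.swap a b = ν - eV b := by
    funext j
    simp only [Function.comp_apply, Pi.sub_apply, eV, Equiv.swap_apply_eq_iff,
      Equiv.swap_apply_left]
    rw [Equiv.swap_apply_def]
    split_ifs <;> simp_all
  refine ⟨b, hmax a rfl, hb, ?_⟩
  rw [sortDesc_comp_perm (Equiv.swap a b), hswap]
  rw [hswap]
  intro i j hij
  have := hν hij
  have := hmax j
  simp only [Pi.sub_apply, eV]
  split_ifs <;> grind

lemma revNeg_revNeg (α : GP r) : revNeg (revNeg α) = α := by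
  funext i
  simp [revNeg]

lemma revNeg_add (α β : GP r) : revNeg (α + β) = revNeg α + revNeg β := by
  funext i
  simp [revNeg, add_comm]

lemma revNeg_sub (α β : GP r) : revNeg (α - β) = revNeg α - revNeg β := by
  funext i
  simp only [revNeg, Pi.sub_apply]
  ring

lemma revNeg_eV (a : Fin r) : revNeg (eV a) = -eV a.rev := by
  funext i
  simp only [revNeg, eV, Pi.neg_apply, Fin.rev_eq_iff]

lemma antitone_revNeg (h : Antitone α) : Antitone (revNeg α) := fun _ _ hij =>
  neg_le_neg (h (Fin.rev_le_rev.mpr hij))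

lemma sortDesc_revNeg (α : GP r) : sortDesc (revNeg α) = revNeg (sortDesc α) := by
  have hcomp : revNeg (sortDesc α) =
      revNeg α ∘ (((Fin.revPerm.trans Fin.revPerm).trans (Tuple.sort α)).trans Fin.revPerm :
        Equiv.Perm (Fin r)) := by
    funext i
    simp [revNeg, sortDesc]
  rw [hcomp]
  exact sortDesc_comp_perm _ (hcomp ▸ antitone_revNeg (sortDesc_antitone α))

end Sorting

section Slide

variable {r : ℕ} {R : ℕ → GP r}

/-- Promotion without a horizon: `BK_k ∘ ⋯ ∘ BK_1` for all `k` at once. -/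
def slide (R : ℕ → GP r) : ℕ → GP r
  | 0 => R 0
  | k + 1 => sortDesc (R (k + 2) + slide R k - R (k + 1))

lemma slide_revNeg (R : ℕ → GP r) (k : ℕ) :
    slide (fun k => revNeg (R k)) k = revNeg (slide R k) := by
  induction k with
  | zero => rfl
  | succ k ih => rw [slide, slide, ih, ← revNeg_add, ← revNeg_sub, sortDesc_revNeg]

lemma antitone_slide (h0 : Antitone (R 0)) (k : ℕ) : Antitone (slide R k) := by
  cases k with
  | zero => exact h0
  | succ k => exact sortDesc_antitone _

lemma exists_eq_slide_add_eV (hR : ∀ k, Antitone (R k)) {x : Fin r} (hx : R 1 = R 0 + eV x) :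
    ∃ a : ℕ → Fin r, a 0 = x ∧ (∀ k, R (k + 1) = slide R k + eV (a k)) ∧ Monotone a ∧
      ∀ k, R (k + 2) (a (k + 1)) = R (k + 2) (a k) := by
  choose next hle hval hsort using fun k => exists_sortDesc_sub_eV (hR k)
  refine ⟨Nat.rec x fun k y => next (k + 2) y, rfl, fun k => ?_,
    monotone_nat_of_le_succ fun k => hle _ _, fun k => hval _ _⟩
  induction k with
  | zero => exact hx
  | succ k ih =>
    rw [slide, show R (k + 2) + slide R k - R (k + 1) = R (k + 2) - (R (k + 1) - slide R k) by
      abel, sub_eq_of_eq_add' ih, hsort]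
    abel

end Slide

section Tableau

variable {r : ℕ} {δ : ℕ → ℤ} {S : ℕ → GP r}

/-- The extension of a vector by zero. -/
def zeroExt (v : GP r) (j : ℕ) : ℤ := if h : j < r then v ⟨j, h⟩ else 0

/-- A sequence of vectors in `ℤ^r` as a path in `ℤ^ℕ`. -/
def toPath (S : ℕ → GP r) : LatticePath := fun k => zeroExt (S k)

lemma zeroExt_val (v : GP r) (j : Fin r) : zeroExt v j = v j := dif_pos j.2

lemma zeroExt_injective : Function.Injective (zeroExt : GP r → ℕ → ℤ) := fun v w h => by
  funext j
  rw [← zeroExt_val v, h, zeroExt_val]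

lemma zeroExt_add (v w : GP r) : zeroExt (v + w) = zeroExt v + zeroExt w := by
  funext j
  simp only [zeroExt, Pi.add_apply]
  split_ifs <;> simp

lemma zeroExt_smul_eV (c : ℤ) (a : Fin r) : zeroExt (c • eV a) = Pi.single (a : ℕ) c := by
  funext j
  simp only [zeroExt, Pi.single_apply, Pi.smul_apply, eV, Fin.ext_iff, smul_eq_mul]
  grind

lemma toPath_revNeg (S : ℕ → GP r) : toPath (fun k => revNeg (S k)) = dual r (toPath S) := by
  funext k j
  simp only [toPath, dual, rowRev, zeroExt, revNeg, Fin.rev]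
  split_ifs
  · simp only [Nat.sub_sub, Nat.add_comm 1 j]
  all_goals omega

lemma isDominant_toPath : IsDominant r (toPath S) ↔ ∀ k, Antitone (S k) := by
  rcases r with - | r
  · exact ⟨fun _ _ => Subsingleton.antitone _, fun _ i hi => by omega⟩
  refine ⟨fun h k => Fin.antitone_iff_succ_le.mpr fun i => ?_, fun h i hi k => ?_⟩
  · have := h i (by omega) k
    rw [← zeroExt_val (S k), ← zeroExt_val (S k)]
    exact sub_nonneg.mp this
  · have := h k (Fin.le_def.mpr (Nat.le_succ i) : (⟨i, by omega⟩ : Fin (r + 1)) ≤ ⟨i + 1, hi⟩)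
    simpa [gap, toPath, zeroExt, hi, show i < r + 1 by omega] using this

/-- The infinite oscillating tableau `S` of type `δ`; a step of type `0` changes nothing. -/
structure IsOscillating (δ : ℕ → ℤ) (S : ℕ → GP r) : Prop where
  isUnitPath : IsUnitPath δ (toPath S)
  antitone (k : ℕ) : Antitone (S k)

lemma IsOscillating.zero (h : IsOscillating δ S) : S 0 = 0 :=
  zeroExt_injective (h.isUnitPath.zero.trans (by funext j; simp [zeroExt]))

lemma IsOscillating.exists_step (h : IsOscillating δ S) {v : ℕ} (hv : δ v ≠ 0) :
    ∃ x, S (v + 1) = S v + δ v • eV x := by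
  obtain ⟨q, hq⟩ := h.isUnitPath.step v
  have hqr : q < r := by
    by_contra hqr
    exact hv (by simpa [toPath, zeroExt, hqr] using (congrFun hq q).symm)
  exact ⟨⟨q, hqr⟩, zeroExt_injective (by rw [zeroExt_add, zeroExt_smul_eV]; exact hq)⟩

protected lemma IsOscillating.revNeg (h : IsOscillating δ S) :
    IsOscillating (-δ) (fun k => revNeg (S k)) where
  isUnitPath := toPath_revNeg S ▸ h.isUnitPath.dual r
  antitone k := antitone_revNeg (h.antitone k)

end Tableau

section Row

variable {r m t u k : ℕ} {δ : ℕ → ℤ} {ρ : LatticePath} {a : ℕ → ℕ} {R S : ℕ → GP r}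

lemma depth_gap_sub_single (h1 : ρ 1 = Pi.single 0 1) (ha0 : a 0 = 0) (ha : Monotone a)
    (hdom : 0 ≤ gap m ρ) (hpos : ∀ k, a k = m → 0 < gap m ρ (k + 1))
    (hflat : ∀ k, a k ≤ m → m < a (k + 1) → gap m ρ (k + 2) = 0) (k : ℕ) :
    depth (gap m fun k => ρ (k + 1) - Pi.single (min (a k) m) 1) k = if m < a k then 1 else 0 := by
  have hgap (k : ℕ) : gap m (fun k => ρ (k + 1) - Pi.single (min (a k) m) 1) k =
      gap m ρ (k + 1) - if m ≤ a k then 1 else 0 := by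
    simp only [gap, Pi.sub_apply, Pi.single_apply, show m + 1 ≠ min (a k) m by omega, if_false,
      show m = min (a k) m ↔ m ≤ a k by omega]
    ring
  induction k with
  | zero =>
    rw [depth_zero, hgap]
    simp [gap, h1, ha0, Pi.single_apply]
  | succ k ih =>
    have hmono : a k ≤ a (k + 1) := ha k.le_succ
    have hnonneg := hdom (k + 2)
    rw [depth_succ, ih, hgap]
    have := hpos (k + 1)
    have := hflat k
    simp only [Pi.zero_apply, add_assoc, one_add_one_eq_two] at *
    split_ifs <;> omega

lemma sweep_shift_one (h1 : ρ 1 = Pi.single 0 1) (ha0 : a 0 = 0) (ha : Monotone a)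
    (hdom : IsDominant r ρ) (hpos : ∀ k, a k + 1 < r → 0 < gap (a k) ρ (k + 1))
    (hflat : ∀ k j, a k ≤ j → j < a (k + 1) → j + 1 < r → gap j ρ (k + 2) = 0) (hm : m < r) :
    sweep m (shift 1 ρ) = fun k => ρ (k + 1) - Pi.single (min (a k) m) 1 := by
  induction m with
  | zero =>
    funext k
    rw [sweep, shift, h1, min_eq_right (a k).zero_le, add_comm]
  | succ m ih =>
    funext k
    rw [sweep, ih (by omega), pitman, depth_gap_sub_single h1 ha0 ha (hdom m hm)
      (fun k hk => hk ▸ hpos k (hk ▸ hm)) fun k hk hk' => hflat k m hk hk' hm]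
    rcases lt_or_ge m (a k) with hmk | hmk
    · rw [if_pos hmk, min_eq_right hmk.le, min_eq_right hmk, one_smul, simpleRoot]
      abel
    · rw [if_neg hmk.not_gt, min_eq_left hmk, min_eq_left (by omega), zero_smul, add_zero]

/-- A box added (`ε = 1`) moves weakly down from row `a` to row `b`; a removed box (`ε = -1`)
moves weakly up. -/
def Moves (ε : ℤ) (a b : ℕ) : Prop := (ε = 1 → a ≤ b) ∧ (ε = -1 → b ≤ a)

/-- The row into which the first step of a tableau, if it has sign `ε`, puts its box. -/
def startRow (r : ℕ) (ε : ℤ) : ℕ := if ε = 1 then 0 else r - 1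

/-- The route of the box sliding through `R` under promotion: `R (k + 1)` and `slide R k` differ
by `ε` times a box in row `a k`. -/
structure IsRoute (ε : ℤ) (R : ℕ → GP r) (a : ℕ → Fin r) : Prop where
  eq_slide_add (k : ℕ) : R (k + 1) = slide R k + ε • eV (a k)
  moves (k : ℕ) : Moves ε (a k) (a (k + 1))
  start : (a 0 : ℕ) = startRow r ε

lemma Moves.rev {ε : ℤ} {x y : Fin r} (h : Moves ε x y) : Moves (-ε) x.rev y.rev := by
  simp only [Moves, Fin.val_rev] at h ⊢
  omega

protected lemma IsRoute.revNeg {ε : ℤ} (hε : ε = 1 ∨ ε = -1) {b : ℕ → Fin r} (h : IsRoute ε R b) :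
    IsRoute (-ε) (fun k => revNeg (R k)) (fun k => (b k).rev) where
  eq_slide_add k := by
    rw [slide_revNeg, h.eq_slide_add]
    rcases hε with rfl | rfl
    · simp [revNeg_add, revNeg_eV]
    · simp [revNeg_sub, revNeg_eV, ← sub_eq_add_neg]
  moves k := (h.moves k).rev
  start := by
    have := h.start
    rw [Fin.val_rev]
    simp only [startRow] at this ⊢
    split_ifs at this ⊢ <;> omega

lemma IsOscillating.exists_step_one_of_pos (h : IsOscillating δ R) (hδ : δ 0 = 1) :
    ∃ x : Fin r, (x : ℕ) = 0 ∧ R 1 = R 0 + eV x := by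
  obtain ⟨x, hx⟩ := h.exists_step (v := 0) (by omega)
  rw [hδ, one_smul] at hx
  refine ⟨x, ?_, hx⟩
  by_contra hx0
  have := h.antitone 1 (show (⟨0, by omega⟩ : Fin r) ≤ x from Nat.zero_le _)
  simp [hx, h.zero, eV, Fin.ext_iff, Ne.symm hx0] at this

lemma IsOscillating.exists_isRoute_of_pos (h : IsOscillating δ R) (hδ : δ 0 = 1) :
    ∃ a, IsRoute 1 R a ∧ toPath (slide R) = highest r (shift 1 (toPath R)) := by
  obtain ⟨x, hx0, hx⟩ := h.exists_step_one_of_pos hδ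
  obtain ⟨a, rfl, hslide, hmono, hflat⟩ := exists_eq_slide_add_eV h.antitone hx
  refine ⟨a, ⟨fun k => by simpa using hslide k, fun k => ⟨fun _ => hmono k.le_succ, by simp⟩,
    hx0⟩, ?_⟩
  have hpath (k : ℕ) : toPath R (k + 1) = toPath (slide R) k + Pi.single (a k : ℕ) 1 := by
    rw [toPath, hslide, zeroExt_add, ← zeroExt_smul_eV, one_smul, toPath]
  have hdom : IsDominant r (toPath (slide R)) :=
    isDominant_toPath.mpr (antitone_slide (h.antitone 0))
  have hzero : toPath (slide R) 0 = 0 := h.isUnitPath.zero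
  have hsweep : sweep (r - 1) (shift 1 (toPath R)) = toPath (slide R) := by
    rw [sweep_shift_one (a := fun k => a k) (r := r) (by simp [hpath, hzero, hx0]) hx0 hmono
      (isDominant_toPath.mpr h.antitone) ?_ ?_ (by have := (a 0).2; omega)]
    · funext k
      rw [hpath, min_eq_left (by omega), add_sub_cancel_right]
    · intro k hk
      have := hdom (a k) hk k
      simp only [gap, hpath, Pi.add_apply, Pi.single_eq_same, Pi.zero_apply,
        Pi.single_eq_of_ne (Nat.succ_ne_self _)] at this ⊢
      omega
    · intro k j hj hj' hjr
      have hle := h.antitone (k + 2) (show a k ≤ ⟨j, by omega⟩ from hj)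
      have hge := h.antitone (k + 2) (show ⟨j + 1, hjr⟩ ≤ a (k + 1) from hj')
      have := isDominant_toPath.mpr h.antitone j hjr (k + 2)
      have := hflat k
      simp only [gap, toPath, zeroExt, hjr, show j < r by omega, dif_pos, Pi.zero_apply] at *
      omega
  rw [← (h.isUnitPath.shift 1).apply_sweep (m := r - 1) (F := highest r)
    fun i ρ hi hρ => hρ.highest_pitman (by omega), hsweep, highest_eq_self hzero hdom]

lemma dual_shift (r u : ℕ) (π : LatticePath) : dual r (shift u π) = shift u (dual r π) := by
  funext v j
  simp only [dual, shift, Pi.sub_apply]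
  ring

lemma IsUnitPath.highest_dual_highest_dual {π : LatticePath} (h : IsUnitPath δ π) (r : ℕ) :
    highest r (dual r (highest r (dual r π))) = highest r π := by
  rw [(h.dual r).highest_comp_highest (fun ρ hρ => hρ.dual r) (fun i => r - 2 - i)
    (fun i hi => by omega) fun i ρ hi hρ => by
      rw [dual_pitman ρ hi, pitman_idem (hρ.dual r).zero], dual_dual]

lemma IsOscillating.exists_isRoute_of_neg (h : IsOscillating δ R) (hδ : δ 0 = -1) :
    ∃ a, IsRoute (-1) R a ∧ toPath (slide R) = highest r (shift 1 (toPath R)) := by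
  obtain ⟨a, ha, hpath⟩ := h.revNeg.exists_isRoute_of_pos (by simp [hδ])
  refine ⟨_, by simpa only [revNeg_revNeg] using ha.revNeg (Or.inl rfl), ?_⟩
  have hslide : slide (fun k => revNeg (R k)) = fun k => revNeg (slide R k) :=
    funext (slide_revNeg R)
  rw [hslide, toPath_revNeg, toPath_revNeg, ← dual_shift] at hpath
  rw [← (h.isUnitPath.shift 1).highest_dual_highest_dual, ← hpath, dual_dual]
  exact (highest_eq_self (π := toPath (slide R)) h.isUnitPath.zero
    (isDominant_toPath.mpr (antitone_slide (h.antitone 0)))).symm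

lemma IsOscillating.exists_isRoute (h : IsOscillating δ R) (hδ : δ 0 ≠ 0) :
    ∃ a, IsRoute (δ 0) R a ∧ toPath (slide R) = highest r (shift 1 (toPath R)) := by
  have := h.isUnitPath.neg_one_le 0
  have := h.isUnitPath.le_one 0
  rcases (by omega : δ 0 = 1 ∨ δ 0 = -1) with hpos | hneg
  · exact hpos ▸ h.exists_isRoute_of_pos hpos
  · exact hneg ▸ h.exists_isRoute_of_neg hneg

protected lemma IsOscillating.slide (h : IsOscillating δ R) (hδ : δ 0 ≠ 0) :
    IsOscillating (fun v => δ (1 + v)) (slide R) where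
  isUnitPath := by
    obtain ⟨a, -, hpath⟩ := h.exists_isRoute hδ
    exact hpath ▸ (h.isUnitPath.shift 1).highest r
  antitone := antitone_slide (h.antitone 0)

protected lemma IsOscillating.slide_iterate (h : IsOscillating δ S) (hδ : ∀ v < u, δ v ≠ 0) :
    IsOscillating (fun v => δ (u + v)) (slide^[u] S) := by
  induction u with
  | zero => simpa using h
  | succ u ih =>
    rw [Function.iterate_succ_apply']
    simpa only [← add_assoc] using (ih fun v hv => hδ v (by omega)).slide (hδ u u.lt_succ_self)

lemma IsOscillating.toPath_slide_iterate (h : IsOscillating δ S) (hδ : ∀ v < u, δ v ≠ 0) :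
    toPath (slide^[u] S) = highest r (shift u (toPath S)) := by
  induction u with
  | zero =>
    have hshift : shift 0 (toPath S) = toPath S := by
      funext v
      simp [shift, h.isUnitPath.zero]
    rw [hshift, highest_eq_self h.isUnitPath.zero (isDominant_toPath.mpr h.antitone)]
    rfl
  | succ u ih =>
    have hlt : ∀ v < u, δ v ≠ 0 := fun v hv => hδ v (by omega)
    obtain ⟨a, -, hpath⟩ := (h.slide_iterate hlt).exists_isRoute (hδ u u.lt_succ_self)
    have hshift : shift 1 (shift u (toPath S)) = shift (u + 1) (toPath S) := by
      funext v
      simp only [shift, add_assoc, sub_sub_sub_cancel_right]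
    rw [Function.iterate_succ_apply', hpath, ih hlt,
      (h.isUnitPath.shift u).highest_comp_highest (fun ρ hρ => hρ.shift 1) id (fun i hi => hi)
        fun i ρ _ hρ => hρ.pitman_shift_pitman i, hshift]

lemma BKseg_one_apply_of_lt (S : ℕ → GP r) (h : m < k) : BKseg 1 m S k = S k := by
  induction m with
  | zero => rfl
  | succ m ih => rw [BKseg, Function.comp_apply, BK, if_neg (by omega), ih (by omega)]

lemma BKseg_one_apply_of_le (S : ℕ → GP r) (h : k ≤ m) : BKseg 1 m S k = slide S k := by
  induction m generalizing k with
  | zero =>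
    obtain rfl := Nat.le_zero.mp h
    rfl
  | succ m ih =>
    rw [BKseg, Function.comp_apply, BK]
    split_ifs with hk
    · obtain rfl : k = m + 1 := by omega
      rw [slide, Nat.add_comm 1 m, Nat.add_sub_cancel, ih le_rfl,
        BKseg_one_apply_of_lt S (by omega), BKseg_one_apply_of_lt S (by omega)]
    · exact ih (by omega)

lemma slide_congr {R' : ℕ → GP r} (h : ∀ j ≤ k + 1, R j = R' j) : slide R k = slide R' k := by
  induction k with
  | zero => exact h 0 (by omega)
  | succ k ih =>
    rw [slide, slide, ih fun j hj => h j (by omega), h (k + 2) le_rfl, h (k + 1) (by omega)]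

lemma PE_eq_slide_iterate (S : ℕ → GP r) (h : u + k ≤ t) : PE t S u k = slide^[u] S k := by
  induction u generalizing k with
  | zero => rfl
  | succ u ih =>
    rw [PE, Function.iterate_succ_apply', Function.iterate_succ_apply', promo,
      BKseg_one_apply_of_le _ (by omega)]
    exact slide_congr fun j hj => ih (by omega)

end Row

section Crossing

variable {r t u w z k i : ℕ} {ε ε' m m' : ℤ} {δ : ℕ → ℤ} {S S' : ℕ → GP r}

/-- A box of sign `ε` moving from row `a` to row `b` crosses the wall between rows `i - 1` and
`i` (counted from `0`). -/
def Crosses (ε : ℤ) (a b i : ℕ) : Prop := (ε = 1 ∧ a < i ∧ i ≤ b) ∨ (ε = -1 ∧ b < i ∧ i ≤ a)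

lemma moves_of_forall_lt {a : ℕ → ℕ} {N : ℕ} (h : ∀ k < N, Moves ε (a k) (a (k + 1))) :
    Moves ε (a 0) (a N) := by
  induction N with
  | zero => exact ⟨fun _ => le_rfl, fun _ => le_rfl⟩
  | succ N ih =>
    have := ih fun k hk => h k (by omega)
    have := h N N.lt_succ_self
    simp only [Moves] at *
    omega

lemma exists_crosses_iff {a : ℕ → ℕ} {N : ℕ} (h : ∀ k < N, Moves ε (a k) (a (k + 1))) :
    (∃ k < N, Crosses ε (a k) (a (k + 1)) i) ↔ Crosses ε (a 0) (a N) i := by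
  induction N with
  | zero => simp [Crosses]
  | succ N ih =>
    have hinit : ∀ k < N, Moves ε (a k) (a (k + 1)) := fun k hk => h k (by omega)
    have := moves_of_forall_lt hinit
    have := h N N.lt_succ_self
    simp only [Nat.lt_succ_iff_lt_or_eq, or_and_right, exists_or, exists_eq_left, ih hinit]
    simp only [Moves, Crosses] at *
    omega

lemma smul_eV_inj {x y : Fin r} (hε : ε ≠ 0) :
    ε • eV x = ε' • eV y ↔ ε = ε' ∧ x = y := by
  refine ⟨fun h => ?_, fun ⟨hsign, hrow⟩ => by rw [hsign, hrow]⟩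
  have := congrFun h x
  simp only [Pi.smul_apply, eV, smul_eq_mul, if_true, mul_one, mul_ite, mul_zero] at this
  split_ifs at this with hxy
  · exact ⟨this, hxy⟩
  · exact absurd this hε

lemma cases_of_smul_eV_add_smul_eV (hε : ε ≠ 0) (hε' : ε' ≠ 0) {a b p q : Fin r}
    (h : ε • eV a + ε' • eV p = ε' • eV q + ε • eV b) :
    (a = b ∧ p = q) ∨ (a = q ∧ p = b ∧ ε = ε') ∨ (a = p ∧ q = b ∧ ε + ε' = 0) := by
  have heval (j : Fin r) := congrFun h j
  simp only [Pi.add_apply, Pi.smul_apply, eV, smul_eq_mul, mul_ite, mul_one, mul_zero] at heval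
  have ha := heval a
  have hb := heval b
  have hp := heval p
  have hq := heval q
  grind

lemma moves_and_crosses_of_square (hε : ε = 1 ∨ ε = -1) (hε' : ε' = 1 ∨ ε' = -1)
    {a b p q : Fin r} (h : ε • eV a + ε' • eV p = ε' • eV q + ε • eV b) (hab : Moves ε a b) :
    Moves (-ε') p q ∧ ∀ i, Crosses ε a b i ↔ Crosses (-ε') p q i := by
  have hcases := cases_of_smul_eV_add_smul_eV (by omega) (by omega) h
  simp only [Fin.ext_iff, Moves, Crosses] at *
  exact ⟨by omega, fun i => by omega⟩

lemma recorded_iff_crosses (hε : ε = 1 ∨ ε = -1) {a : ℕ → Fin r}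
    (h : IsRoute ε (slide^[w] S) a) (hk : w + k + 2 ≤ t) :
    recorded r t S i (w + 1) (w + k + 2) ↔ Crosses ε (a k) (a (k + 1)) i := by
  have hbelow (j : ℕ) : slide^[w] S (j + 1) = slide^[w + 1] S j + ε • eV (a j) := by
    rw [Function.iterate_succ_apply', h.eq_slide_add]
  have hadd (j : ℕ) (x : Fin r) :
      slide^[w] S (j + 1) = slide^[w + 1] S j + eV x ↔ ε = 1 ∧ a j = x := by
    rw [hbelow, add_right_inj]
    simpa using smul_eV_inj (ε' := 1) (x := a j) (y := x) (show ε ≠ 0 by omega)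
  have hsub (j : ℕ) (x : Fin r) :
      slide^[w + 1] S j = slide^[w] S (j + 1) + eV x ↔ ε = -1 ∧ a j = x := by
    rw [← sub_eq_iff_eq_add, eq_comm, hbelow, sub_eq_add_neg, add_right_inj]
    simpa using smul_eV_inj (ε' := -1) (x := a j) (y := x) (show ε ≠ 0 by omega)
  unfold recorded
  rw [show w + k + 2 - (w + 1) - 1 = k by omega, show w + k + 2 - (w + 1) = k + 1 by omega,
    Nat.add_sub_cancel, PE_eq_slide_iterate S (by omega), PE_eq_slide_iterate S (by omega),
    PE_eq_slide_iterate S (by omega), PE_eq_slide_iterate S (by omega)]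
  simp only [hadd, hsub, Crosses]
  constructor
  · rintro ⟨x, y, ⟨⟨hε, rfl⟩, ⟨-, rfl⟩, hcross⟩ | ⟨⟨hε, rfl⟩, ⟨-, rfl⟩, hcross⟩⟩
    exacts [Or.inl ⟨hε, hcross⟩, Or.inr ⟨hε, hcross⟩]
  · rintro (⟨hε, hcross⟩ | ⟨hε, hcross⟩)
    exacts [⟨_, _, Or.inl ⟨⟨hε, rfl⟩, ⟨hε, rfl⟩, hcross⟩⟩,
      ⟨_, _, Or.inr ⟨⟨hε, rfl⟩, ⟨hε, rfl⟩, hcross⟩⟩]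

lemma IsOscillating.sign_eq (h : IsOscillating δ S) (hw : δ w ≠ 0) : δ w = 1 ∨ δ w = -1 := by
  have := h.isUnitPath.neg_one_le w
  have := h.isUnitPath.le_one w
  omega

lemma IsOscillating.slide_iterate_apply_sub (h : IsOscillating δ S) (hm : ∀ i, S t i = m)
    (hut : u ≤ t) (hδ : ∀ v < u, δ v ≠ 0) (j : Fin r) :
    slide^[u] S (t - u) j = m - S u j.rev := by
  have hgap : IsDominant r (timeRev (t - u) (shift u (toPath S))) := fun i hi v => by
    have hlt : i < r := by omega
    have := isDominant_toPath.mpr h.antitone i hi (u + (t - u - v))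
    simp only [gap, timeRev, shift, Nat.add_sub_cancel' hut, toPath, zeroExt, hi, hlt, dif_pos,
      Pi.sub_apply, hm, Pi.zero_apply] at this ⊢
    omega
  rw [← zeroExt_val (slide^[u] S (t - u))]
  change toPath (slide^[u] S) (t - u) j = _
  rw [h.toPath_slide_iterate hδ,
    (h.isUnitPath.shift u).highest_apply_of_isDominant_timeRev hgap j.2, shift,
    Nat.add_sub_cancel' hut, Pi.sub_apply,
    show r - 1 - (j : ℕ) = (j.rev : Fin r) by rw [Fin.val_rev]; omega]
  simp only [toPath, zeroExt_val, hm]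

lemma IsOscillating.exists_recorded_row_iff (h : IsOscillating δ S) (hm : ∀ i, S t i = m)
    (hδ : ∀ v < t, δ v ≠ 0) (hw : w < t) {x : Fin r} (hx : S (w + 1) = S w + δ w • eV x) :
    (∃ v, w + 1 < v ∧ v ≤ t ∧ recorded r t S i (w + 1) v) ↔
      Crosses (δ w) (startRow r (δ w)) x.rev i := by
  have hsign := h.sign_eq (hδ w hw)
  obtain ⟨a, ha, -⟩ :=
    (h.slide_iterate (u := w) fun v hv => hδ v (by omega)).exists_isRoute (hδ w hw)
  simp only [add_zero] at ha
  have hend : a (t - (w + 1)) = x.rev := by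
    have hroute := ha.eq_slide_add (t - (w + 1))
    rw [← Function.iterate_succ_apply' slide, show t - (w + 1) + 1 = t - w by omega,
      ← sub_eq_iff_eq_add'] at hroute
    have hbox : δ w • eV (a (t - (w + 1))) = δ w • eV x.rev := by
      rw [← hroute]
      funext j
      rw [Pi.sub_apply, h.slide_iterate_apply_sub hm hw.le fun v hv => hδ v (by omega),
        h.slide_iterate_apply_sub hm hw fun v hv => hδ v (by omega), hx]
      simp [eV, Fin.rev_eq_iff]
    exact ((smul_eV_inj (hδ w hw)).mp hbox).2
  rw [← hend, ← ha.start, ← exists_crosses_iff fun k _ => ha.moves k]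
  constructor
  · rintro ⟨v, hwv, hvt, hrec⟩
    obtain ⟨k, rfl⟩ := Nat.exists_eq_add_of_le (show w + 2 ≤ v by omega)
    rw [add_right_comm] at hrec
    exact ⟨k, by omega, (recorded_iff_crosses hsign ha (by omega)).mp hrec⟩
  · rintro ⟨k, hk, hcross⟩
    exact ⟨w + k + 2, by omega, by omega,
      (recorded_iff_crosses hsign ha (by omega)).mpr hcross⟩

lemma IsOscillating.moves_and_recorded_iff (h : IsOscillating δ S) (hδ : ∀ v < t, δ v ≠ 0)
    (hwz : w < z) (hz : z < t) {p q : Fin r}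
    (hp : slide^[w] S (z - w + 1) = slide^[w] S (z - w) + δ z • eV p)
    (hq : slide^[w + 1] S (z - (w + 1) + 1) =
      slide^[w + 1] S (z - (w + 1)) + δ z • eV q) :
    Moves (-δ z) p q ∧ ∀ i, recorded r t S i (w + 1) (z + 1) ↔ Crosses (-δ z) p q i := by
  obtain ⟨k, rfl⟩ := Nat.exists_eq_add_of_lt hwz
  obtain ⟨a, ha, -⟩ :=
    (h.slide_iterate (u := w) fun v hv => hδ v (by omega)).exists_isRoute (hδ w (by omega))
  have hsign := h.sign_eq (hδ w (by omega))
  have hsquare : δ w • eV (a k) + δ (w + k + 1) • eV p =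
      δ (w + k + 1) • eV q + δ w • eV (a (k + 1)) := by
    have hleft := ha.eq_slide_add k
    have hright := ha.eq_slide_add (k + 1)
    rw [← Function.iterate_succ_apply' slide] at hleft hright
    rw [show w + k + 1 - w = k + 1 by omega] at hp
    rw [show w + k + 1 - (w + 1) = k by omega] at hq
    rw [add_zero] at hleft hright
    refine add_left_cancel (a := slide^[w + 1] S k) ?_
    rw [← add_assoc, ← hleft, ← hp, hright, hq, add_assoc]
  have hcross := moves_and_crosses_of_square hsign (h.sign_eq (hδ _ hz)) hsquare (ha.moves k)
  exact ⟨hcross.1, fun i => (recorded_iff_crosses hsign ha (by omega)).trans (hcross.2 i)⟩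

lemma IsOscillating.exists_recorded_column_iff (h : IsOscillating δ S)
    (hδ : ∀ v < t, δ v ≠ 0) (hz : z < t) {x : Fin r} (hx : S (z + 1) = S z + δ z • eV x) :
    (∃ u, 1 ≤ u ∧ u < z + 1 ∧ recorded r t S i u (z + 1)) ↔
      Crosses (-δ z) x (startRow r (δ z)) i := by
  have hrow (u : ℕ) (hu : u < t) := h.slide_iterate (u := u) fun v hv => hδ v (by omega)
  have hstep (u : ℕ) (hu : u ≤ z) :
      ∃ y, slide^[u] S (z - u + 1) = slide^[u] S (z - u) + δ z • eV y := by
    have := (hrow u (by omega)).exists_step (v := z - u)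
    simp only [Nat.add_sub_cancel' hu] at this
    exact this (hδ z hz)
  have : Inhabited (Fin r) := ⟨x⟩
  choose! p hp using hstep
  have hp0 : p 0 = x :=
    ((smul_eV_inj (hδ z hz)).mp (add_left_cancel ((hp 0 z.zero_le).symm.trans hx))).2
  have hpz : (p z : ℕ) = startRow r (δ z) := by
    obtain ⟨a, ha, -⟩ := (hrow z hz).exists_isRoute (hδ z hz)
    have hstart := hp z le_rfl
    rw [Nat.sub_self, ha.eq_slide_add 0, add_zero] at hstart
    rw [← ((smul_eV_inj (hδ z hz)).mp (add_left_cancel hstart)).2]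
    exact ha.start
  have hsquare (w : ℕ) (hw : w < z) :=
    h.moves_and_recorded_iff hδ hw hz (hp w (by omega)) (hp (w + 1) (by omega))
  rw [← hp0, ← hpz, ← exists_crosses_iff (a := fun w => p w) fun w hw => (hsquare w hw).1]
  constructor
  · rintro ⟨u, hu, huz, hrec⟩
    obtain ⟨w, rfl⟩ := Nat.exists_eq_add_of_le' hu
    exact ⟨w, by omega, ((hsquare w (by omega)).2 i).mp hrec⟩
  · rintro ⟨w, hw, hcross⟩
    exact ⟨w + 1, by omega, by omega, ((hsquare w hw).2 i).mpr hcross⟩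

lemma eq_of_crosses_startRow_iff (hε : ε = 1 ∨ ε = -1) {x y : Fin r}
    (hrow : ∀ i, 1 ≤ i → i ≤ r / 2 →
      (Crosses ε (startRow r ε) x.rev i ↔ Crosses ε (startRow r ε) y.rev i))
    (hcol : ∀ i, 1 ≤ i → i ≤ r / 2 →
      (Crosses (-ε) x (startRow r ε) i ↔ Crosses (-ε) y (startRow r ε) i)) :
    x = y := by
  have hdist (i : ℕ) (hi : 1 ≤ i) (hir : i ≤ r / 2) :
      ((x : ℕ) + i < r ↔ (y : ℕ) + i < r) ∧ (i ≤ (x : ℕ) ↔ i ≤ (y : ℕ)) := by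
    have hrowi := hrow i hi hir
    have hcoli := hcol i hi hir
    rcases hε with rfl | rfl <;>
      simp only [Crosses, startRow, Fin.val_rev, ↓reduceIte, Int.reduceNeg, reduceCtorEq, neg_neg,
        true_and, false_and, false_or, or_false] at hrowi hcoli <;>
      omega
  rcases lt_trichotomy x y with hlt | heq | hlt
  · rw [Fin.lt_def] at hlt
    have := hdist (x + 1) (by omega)
    have := hdist (r - 1 - x) (by omega)
    omega
  · exact heq
  · rw [Fin.lt_def] at hlt
    have := hdist (y + 1) (by omega)
    have := hdist (r - 1 - y) (by omega)
    omega

theorem IsOscillating.eq_of_exists_recorded_iff (h : IsOscillating δ S) (h' : IsOscillating δ S')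
    (hδ : ∀ v < t, δ v ≠ 0) (hm : ∀ i, S t i = m) (hm' : ∀ i, S' t i = m')
    (hrow : ∀ i, 1 ≤ i → i ≤ r / 2 → ∀ w < t,
      ((∃ v, w + 1 < v ∧ v ≤ t ∧ recorded r t S i (w + 1) v) ↔
        ∃ v, w + 1 < v ∧ v ≤ t ∧ recorded r t S' i (w + 1) v))
    (hcol : ∀ i, 1 ≤ i → i ≤ r / 2 → ∀ w < t,
      ((∃ u, 1 ≤ u ∧ u < w + 1 ∧ recorded r t S i u (w + 1)) ↔
        ∃ u, 1 ≤ u ∧ u < w + 1 ∧ recorded r t S' i u (w + 1))) (hk : k ≤ t) :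
    S k = S' k := by
  induction k with
  | zero => rw [h.zero, h'.zero]
  | succ w ih =>
    obtain ⟨x, hx⟩ := h.exists_step (hδ w hk)
    obtain ⟨y, hy⟩ := h'.exists_step (hδ w hk)
    have hxy : x = y := by
      refine eq_of_crosses_startRow_iff (h.sign_eq (hδ w hk)) (fun i hi hir => ?_)
        fun i hi hir => ?_
      · rw [← h.exists_recorded_row_iff hm hδ hk hx, ← h'.exists_recorded_row_iff hm' hδ hk hy]
        exact hrow i hi hir w hk
      · rw [← h.exists_recorded_column_iff hδ hk hx, ← h'.exists_recorded_column_iff hδ hk hy]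
        exact hcol i hi hir w hk
    rw [hx, hy, hxy, ih (by omega)]

end Crossing

section OscillizedStep

lemma strictMonoOn_card_filter_le {α : Type*} [Preorder α] [DecidableLE α] (A : Finset α) :
    StrictMonoOn (fun i => (A.filter fun i' => i' ≤ i).card) A := by
  intro x _ y hy hxy
  refine Finset.card_lt_card ((Finset.ssubset_iff_of_subset ?_).mpr ⟨y, ?_, ?_⟩)
  · exact Finset.monotone_filter_right A fun z _ hz => hz.trans hxy.le
  · exact Finset.mem_filter.mpr ⟨hy, le_rfl⟩
  · exact fun h => hxy.not_ge (Finset.mem_filter.mp h).2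

variable {r : ℕ} {c : ℤ} {μ lam : GP r} {j : ℕ}

/-- The rows in which the step `μ → lam` adds or removes a box. -/
def stepSupport (μ lam : GP r) : Finset (Fin r) := Finset.univ.filter fun i => lam i ≠ μ i

/-- The position, counted from `1`, at which the oscillization of `μ → lam` treats row `i`. -/
def oscRank (μ lam : GP r) (i : Fin r) : ℕ :=
  if μ i < lam i then ((stepSupport μ lam).filter fun i' => i' ≤ i).card
  else ((stepSupport μ lam).filter fun i' => i ≤ i').card

lemma mem_stepSupport {i : Fin r} : i ∈ stepSupport μ lam ↔ lam i ≠ μ i := by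
  simp [stepSupport]

lemma oscStep_apply (μ lam : GP r) (j : ℕ) (i : Fin r) :
    oscStep μ lam j i =
      if i ∈ stepSupport μ lam ∧ oscRank μ lam i ≤ j then lam i else μ i := by
  refine if_congr (and_congr_right fun _ => ?_) rfl rfl
  unfold oscRank
  split_ifs <;> rfl

lemma oscRank_mem_Icc {i : Fin r} (hi : i ∈ stepSupport μ lam) :
    oscRank μ lam i ∈ Finset.Icc 1 (stepSupport μ lam).card := by
  rw [Finset.mem_Icc, oscRank]
  split_ifs
  all_goals exact ⟨Finset.card_pos.mpr ⟨i, Finset.mem_filter.mpr ⟨hi, le_rfl⟩⟩,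
    Finset.card_filter_le _ _⟩

lemma oscRank_injOn (h : μ ≤ lam ∨ lam ≤ μ) :
    Set.InjOn (oscRank μ lam) (stepSupport μ lam) := by
  rcases h with h | h
  · refine Set.InjOn.congr (strictMonoOn_card_filter_le _).injOn fun i hi => ?_
    rw [oscRank, if_pos ((h i).lt_of_ne (mem_stepSupport.mp hi).symm)]
  · refine Set.InjOn.congr (strictMonoOn_card_filter_le (α := (Fin r)ᵒᵈ) _).injOn fun i _ => ?_
    rw [oscRank, if_neg (h i).not_gt]
    rfl

lemma exists_oscRank_eq_succ (h : μ ≤ lam ∨ lam ≤ μ) (hj : j < (stepSupport μ lam).card) :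
    ∃ q ∈ stepSupport μ lam, oscRank μ lam q = j + 1 := by
  have himage : (stepSupport μ lam).image (oscRank μ lam) =
      Finset.Icc 1 (stepSupport μ lam).card :=
    Finset.eq_of_subset_of_card_le
      (Finset.image_subset_iff.mpr fun i hi => oscRank_mem_Icc hi)
      (by rw [Finset.card_image_of_injOn (oscRank_injOn h), Nat.card_Icc, Nat.add_sub_cancel])
  exact Finset.mem_image.mp (himage ▸ Finset.mem_Icc.mpr ⟨by omega, hj⟩)

lemma oscStep_zero (μ lam : GP r) : oscStep μ lam 0 = μ := by
  funext i
  rw [oscStep_apply, if_neg]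
  rintro ⟨hi, hrank⟩
  have := (Finset.mem_Icc.mp (oscRank_mem_Icc hi)).1
  omega

lemma oscStep_card (μ lam : GP r) : oscStep μ lam (stepSupport μ lam).card = lam := by
  funext i
  rw [oscStep_apply]
  split_ifs with hi
  · rfl
  · by_contra hne
    have hi' := mem_stepSupport.mpr (Ne.symm hne)
    exact hi ⟨hi', (Finset.mem_Icc.mp (oscRank_mem_Icc hi')).2⟩

lemma exists_oscStep_succ (h : μ ≤ lam ∨ lam ≤ μ) (hj : j < (stepSupport μ lam).card) :
    ∃ q ∈ stepSupport μ lam,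
      oscStep μ lam (j + 1) = oscStep μ lam j + (lam q - μ q) • eV q := by
  obtain ⟨q, hq, hrank⟩ := exists_oscRank_eq_succ h hj
  refine ⟨q, hq, funext fun i => ?_⟩
  rw [Pi.add_apply, Pi.smul_apply, eV, oscStep_apply, oscStep_apply]
  rcases eq_or_ne i q with rfl | hiq
  · simp [hq, hrank]
  · have hne (hi : i ∈ stepSupport μ lam) : oscRank μ lam i ≠ j + 1 := fun hi' =>
      hiq (oscRank_injOn h hi hq (hi'.trans hrank.symm))
    have : (i ∈ stepSupport μ lam ∧ oscRank μ lam i ≤ j + 1) ↔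
        (i ∈ stepSupport μ lam ∧ oscRank μ lam i ≤ j) :=
      and_congr_right fun hi => ⟨fun hle => by have := hne hi; omega, fun hle => by omega⟩
    simp only [this, hiq, if_false, smul_zero, add_zero]

lemma antitone_oscStep (hμ : Antitone μ) (hlam : Antitone lam) (j : ℕ) :
    Antitone (oscStep μ lam j) := by
  intro x y hxy
  have hle : μ y ≤ μ x := hμ hxy
  have hle' : lam y ≤ lam x := hlam hxy
  have hadd : ((stepSupport μ lam).filter fun i => i ≤ x).card ≤
      ((stepSupport μ lam).filter fun i => i ≤ y).card :=
    Finset.card_le_card (Finset.monotone_filter_right _ fun z _ hz => hz.trans hxy)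
  have hremove : ((stepSupport μ lam).filter fun i => y ≤ i).card ≤
      ((stepSupport μ lam).filter fun i => x ≤ i).card :=
    Finset.card_le_card (Finset.monotone_filter_right _ fun z _ hz => hxy.trans hz)
  simp only [oscStep_apply, oscRank, mem_stepSupport] at *
  split_ifs <;> omega

lemma colStep.sub_eq (h : colStep r c μ lam) {i : Fin r} (hi : i ∈ stepSupport μ lam) :
    lam i - μ i = if 0 ≤ c then 1 else -1 := by
  obtain ⟨A, -, h⟩ := h
  rw [mem_stepSupport] at hi
  split_ifs at h ⊢ <;> subst h <;> simp_all [indV]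

lemma colStep.card_stepSupport (h : colStep r c μ lam) :
    (stepSupport μ lam).card = c.natAbs := by
  obtain ⟨A, hA, h⟩ := h
  rw [← hA]
  congr 1
  ext i
  rw [mem_stepSupport]
  split_ifs at h <;> subst h <;> simp [indV]

lemma colStep.le_or_ge (h : colStep r c μ lam) : μ ≤ lam ∨ lam ≤ μ := by
  obtain ⟨A, -, h⟩ := h
  have hA : 0 ≤ indV A := fun i => by
    rw [indV]
    split_ifs <;> simp
  split_ifs at h
  · exact Or.inl (h ▸ le_add_of_nonneg_right hA)
  · exact Or.inr (h ▸ sub_le_self μ hA)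

end OscillizedStep

section Oscillization

variable {r n j k d : ℕ} {T : ℕ → GP r} {c : ℕ → ℤ}

/-- The index of the step of a tableau of type `c` and length `n` whose oscillization contains
the `k`-th single-box step (counted from `0`), and `n` if there is none. -/
def blockIdx (n : ℕ) (c : ℕ → ℤ) (k : ℕ) : ℕ := Nat.findGreatest (fun j => cumC c j ≤ k) n

/-- The type of the oscillization of a tableau of type `c` and length `n`, extended by `0`. -/
def oscType (n : ℕ) (c : ℕ → ℤ) (k : ℕ) : ℤ :=
  if blockIdx n c k = n then 0 else if 0 ≤ c (blockIdx n c k) then 1 else -1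

lemma cumC_succ (c : ℕ → ℤ) (j : ℕ) : cumC c (j + 1) = cumC c j + (c j).natAbs :=
  Finset.sum_range_succ _ _

lemma monotone_cumC (c : ℕ → ℤ) : Monotone (cumC c) :=
  monotone_nat_of_le_succ fun j => cumC_succ c j ▸ Nat.le_add_right _ _

lemma cumC_blockIdx_le (n : ℕ) (c : ℕ → ℤ) (k : ℕ) : cumC c (blockIdx n c k) ≤ k :=
  Nat.findGreatest_spec (P := fun j => cumC c j ≤ k) n.zero_le k.zero_le

lemma blockIdx_eq_of_le (h : cumC c n ≤ k) : blockIdx n c k = n :=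
  (Nat.findGreatest_le n).antisymm (Nat.le_findGreatest le_rfl h)

lemma blockIdx_cumC_add (hj : j < n) (hd : d < (c j).natAbs) :
    blockIdx n c (cumC c j + d) = j := by
  refine le_antisymm (le_of_not_gt fun hlt => ?_)
    (Nat.le_findGreatest hj.le (Nat.le_add_right _ d))
  have := (monotone_cumC c hlt).trans (cumC_blockIdx_le n c _)
  rw [Nat.succ_eq_add_one, cumC_succ] at this
  omega

lemma exists_eq_cumC_add (hk : k < cumC c n) :
    ∃ j < n, ∃ d < (c j).natAbs, k = cumC c j + d := by
  induction n with
  | zero => simp [cumC] at hk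
  | succ n ih =>
    rcases lt_or_ge k (cumC c n) with hlt | hge
    · obtain ⟨j, hj, hd⟩ := ih hlt
      exact ⟨j, hj.trans n.lt_succ_self, hd⟩
    · rw [cumC_succ] at hk
      exact ⟨n, n.lt_succ_self, k - cumC c n, by omega, by omega⟩

lemma oscType_cumC_add (hj : j < n) (hd : d < (c j).natAbs) :
    oscType n c (cumC c j + d) = if 0 ≤ c j then 1 else -1 := by
  rw [oscType, blockIdx_cumC_add hj hd, if_neg hj.ne]

lemma oscType_ne_zero (hk : k < cumC c n) : oscType n c k ≠ 0 := by
  obtain ⟨j, hj, d, hd, rfl⟩ := exists_eq_cumC_add hk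
  rw [oscType_cumC_add hj hd]
  split_ifs <;> simp

lemma IsSkewFT.cum_eq (hT : IsSkewFT r n T c) (hj : j ≤ n) : cum T j = cumC c j :=
  Finset.sum_congr rfl fun i hi =>
    (hT.2 i ((Finset.mem_range.mp hi).trans_le hj)).card_stepSupport

lemma IsSkewFT.stdIdx_eq (hT : IsSkewFT r n T c) (k : ℕ) : stdIdx n T k = blockIdx n c k := by
  refine le_antisymm (Finset.sup_le fun j hj => ?_) (Finset.le_sup (f := id) ?_)
  · rw [Finset.mem_filter, Finset.mem_range, Nat.lt_succ_iff] at hj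
    exact Nat.le_findGreatest hj.1 (hT.cum_eq hj.1 ▸ hj.2)
  · have hle : blockIdx n c k ≤ n := Nat.findGreatest_le n
    exact Finset.mem_filter.mpr ⟨Finset.mem_range.mpr (Nat.lt_succ_of_le hle),
      (hT.cum_eq hle).trans_le (cumC_blockIdx_le n c k)⟩

lemma IsSkewFT.stdT_of_le (hT : IsSkewFT r n T c) (hk : cumC c n ≤ k) : stdT n T k = T n := by
  rw [stdT, hT.stdIdx_eq, if_pos (blockIdx_eq_of_le hk)]

lemma IsSkewFT.stdT_cumC_add_of_lt (hT : IsSkewFT r n T c) (hj : j < n) (hd : d < (c j).natAbs) :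
    stdT n T (cumC c j + d) = oscStep (T j) (T (j + 1)) d := by
  rw [stdT, hT.stdIdx_eq, blockIdx_cumC_add hj hd, if_neg hj.ne, hT.cum_eq hj.le,
    Nat.add_sub_cancel_left]

lemma IsSkewFT.oscStep_natAbs (hT : IsSkewFT r n T c) (hj : j < n) :
    oscStep (T j) (T (j + 1)) (c j).natAbs = T (j + 1) := by
  rw [← (hT.2 j hj).card_stepSupport, oscStep_card]

lemma IsSkewFT.stdT_cumC (hT : IsSkewFT r n T c) (hj : j ≤ n) : stdT n T (cumC c j) = T j := by
  induction hj using Nat.decreasingInduction with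
  | self => exact hT.stdT_of_le le_rfl
  | of_succ j hj ih =>
    rcases Nat.eq_zero_or_pos (c j).natAbs with hzero | hpos
    · rw [cumC_succ, hzero, add_zero] at ih
      rw [ih, ← hT.oscStep_natAbs hj, hzero, oscStep_zero]
    · rw [← oscStep_zero (T j) (T (j + 1)), ← hT.stdT_cumC_add_of_lt hj hpos, add_zero]

lemma IsSkewFT.stdT_cumC_add (hT : IsSkewFT r n T c) (hj : j < n) (hd : d ≤ (c j).natAbs) :
    stdT n T (cumC c j + d) = oscStep (T j) (T (j + 1)) d := by
  rcases hd.eq_or_lt with rfl | hlt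
  · rw [← cumC_succ, hT.stdT_cumC hj, hT.oscStep_natAbs hj]
  · exact hT.stdT_cumC_add_of_lt hj hlt

lemma IsSkewFT.exists_stdT_succ (hT : IsSkewFT r n T c) (hk : k < cumC c n) :
    ∃ q, stdT n T (k + 1) = stdT n T k + oscType n c k • eV q := by
  obtain ⟨j, hj, d, hd, rfl⟩ := exists_eq_cumC_add hk
  have hstep := hT.2 j hj
  obtain ⟨q, hq, hsucc⟩ := exists_oscStep_succ hstep.le_or_ge (hstep.card_stepSupport.symm ▸ hd)
  rw [add_assoc, hT.stdT_cumC_add hj hd, hT.stdT_cumC_add hj hd.le, oscType_cumC_add hj hd, hsucc,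
    hstep.sub_eq hq]
  exact ⟨q, rfl⟩

lemma IsSkewFT.antitone_stdT (hT : IsSkewFT r n T c) (k : ℕ) : Antitone (stdT n T k) := by
  rcases lt_or_ge k (cumC c n) with hk | hk
  · obtain ⟨j, hj, d, hd, rfl⟩ := exists_eq_cumC_add hk
    rw [hT.stdT_cumC_add hj hd.le]
    exact antitone_oscStep (hT.1 j hj.le) (hT.1 (j + 1) hj) d
  · rw [hT.stdT_of_le hk]
    exact hT.1 n le_rfl

lemma IsFT.isOscillating_stdT (hT : IsFT r n T c) : IsOscillating (oscType n c) (stdT n T) where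
  isUnitPath.zero := by
    have hzero := hT.1.stdT_cumC n.zero_le
    rw [cumC, Finset.sum_range_zero, hT.2] at hzero
    rw [toPath, hzero]
    funext j
    simp [zeroExt]
  isUnitPath.neg_one_le k := by
    rw [oscType]
    split_ifs <;> simp
  isUnitPath.le_one k := by
    rw [oscType]
    split_ifs <;> simp
  isUnitPath.step k := by
    rcases lt_or_ge k (cumC c n) with hk | hk
    · obtain ⟨q, hq⟩ := hT.1.exists_stdT_succ hk
      exact ⟨q, by rw [toPath, hq, zeroExt_add, zeroExt_smul_eV, toPath]⟩
    · refine ⟨0, ?_⟩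
      rw [oscType, if_pos (blockIdx_eq_of_le hk), Pi.single_zero, add_zero, toPath, toPath,
        hT.1.stdT_of_le hk, hT.1.stdT_of_le (hk.trans k.le_succ)]
  antitone := hT.1.antitone_stdT

end Oscillization

section PromotionMatrix

variable {r n t i : ℕ} {T T' : ℕ → GP r} {c : ℕ → ℤ}

/-- The excedances of `prom_i(T)`: the rows of the promotion matrix that contain `i` to the right
of the diagonal. -/
def excedances (r n t : ℕ) (T : ℕ → GP r) (i : ℕ) : Set ℕ := {u | ∃ v, u < v ∧ PMmem r n t T i u v}

/-- The excedance values of `prom_i(T)`: the columns of the promotion matrix that contain `i` above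
the diagonal. -/
def excedanceValues (r n t : ℕ) (T : ℕ → GP r) (i : ℕ) : Set ℕ :=
  {v | ∃ u, u < v ∧ PMmem r n t T i u v}

lemma PMmem_iff_of_lt (hi : 1 ≤ i) (hir : i ≤ r - 1) {u v : ℕ} (huv : u < v) :
    PMmem r n t T i u v ↔ 1 ≤ u ∧ v ≤ t ∧ recorded r t (stdT n T) i u v := by
  rw [PMmem, if_pos huv]
  exact ⟨fun h => ⟨h.1, h.2.2.2.1, h.2.2.2.2.2.2.2⟩,
    fun h => ⟨h.1, by omega, by omega, h.2.1, huv.ne, hi, hir, h.2.2⟩⟩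

lemma succ_mem_excedances (hi : 1 ≤ i) (hir : i ≤ r - 1) (w : ℕ) :
    w + 1 ∈ excedances r n t T i ↔
      ∃ v, w + 1 < v ∧ v ≤ t ∧ recorded r t (stdT n T) i (w + 1) v :=
  exists_congr fun v => and_congr_right fun hv => by
    rw [PMmem_iff_of_lt hi hir hv, and_iff_right (Nat.le_add_left 1 w)]

lemma succ_mem_excedanceValues (hi : 1 ≤ i) (hir : i ≤ r - 1) {w : ℕ} (hw : w < t) :
    w + 1 ∈ excedanceValues r n t T i ↔
      ∃ u, 1 ≤ u ∧ u < w + 1 ∧ recorded r t (stdT n T) i u (w + 1) :=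
  exists_congr fun u => by
    constructor
    · rintro ⟨hu, h⟩
      rw [PMmem_iff_of_lt hi hir hu] at h
      exact ⟨h.1, hu, h.2.2⟩
    · rintro ⟨hu1, hu, h⟩
      exact ⟨hu, (PMmem_iff_of_lt hi hir hu).mpr ⟨hu1, hw, h⟩⟩

end PromotionMatrix

theorem tableau_determined_by_promotion_permutations_general
    (r n t : ℕ) (T T' : ℕ → GP r) (c : ℕ → ℤ)
    (hT : IsFT r n T c) (hT' : IsFT r n T' c)
    (hrect : Rect r n T) (hrect' : Rect r n T')
    (ht : t = ∑ j ∈ Finset.range n, (c j).natAbs)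
    (hrow : ∀ i, 1 ≤ i → i ≤ r / 2 → excedances r n t T i = excedances r n t T' i)
    (hcol : ∀ i, 1 ≤ i → i ≤ r / 2 → excedanceValues r n t T i = excedanceValues r n t T' i) :
    ∀ k ≤ n, T k = T' k := by
  intro k hk
  obtain rfl : t = cumC c n := ht
  obtain ⟨m, hm⟩ := hrect
  obtain ⟨m', hm'⟩ := hrect'
  rw [← hT.1.stdT_cumC le_rfl] at hm
  rw [← hT'.1.stdT_cumC le_rfl] at hm'
  rw [← hT.1.stdT_cumC hk, ← hT'.1.stdT_cumC hk]
  refine hT.isOscillating_stdT.eq_of_exists_recorded_iff hT'.isOscillating_stdT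
    (fun v => oscType_ne_zero) hm hm' (fun i hi hir w _ => ?_) (fun i hi hir w hw => ?_)
    (monotone_cumC c hk)
  · rw [← succ_mem_excedances hi (by omega), ← succ_mem_excedances hi (by omega), hrow i hi hir]
  · rw [← succ_mem_excedanceValues hi (by omega) hw, ← succ_mem_excedanceValues hi (by omega) hw,
      hcol i hi hir]

/-- **Corollary.** A rectangular fluctuating tableau is uniquely determined by its type
together with the promotion permutations `prom_i` for `1 ≤ i ≤ ⌊r/2⌋`. -/
theorem tableau_determined_by_promotion_permutations
    (r n t : ℕ) (T T' : ℕ → GP r) (c : ℕ → ℤ)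
    (hT : IsFT r n T c) (hT' : IsFT r n T' c)
    (hrect : Rect r n T) (hrect' : Rect r n T')
    (ht : t = ∑ j ∈ Finset.range n, (c j).natAbs) (ht1 : 1 ≤ t)
    (h : ∀ i, 1 ≤ i → i ≤ r / 2 → ∀ u v, PMmem r n t T i u v ↔ PMmem r n t T' i u v) :
    ∀ k ≤ n, T k = T' k :=
  tableau_determined_by_promotion_permutations_general r n t T T' c hT hT' hrect hrect' ht
    (fun i hi hir => by simp only [excedances, h i hi hir])
    (fun i hi hir => by simp only [excedanceValues, h i hi hir])

end FT
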